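/- Let d ≥ 1, let I be a metric space, let S : I → Matrix d d ℂ be continuous, let Λ ⊆ Σ_I^+ be a nonempty compact θ_+-invariant subset, and let μ be any θ_+-invariant Borel probability measure on Σ_I^+ supported in Λ. Then for μ-almost every i(·) ∈ Λ, the limit lim_{n→∞} ‖S_{i_n}···S_{i_1}‖^{1/n} exists and equals limsup_{n→∞} ρ(S_{i_n}···S_{i_1})^{1/n}. -/

import Mathlib

open Filter Topology MeasureTheory

/-- Operator norm on `d × d` complex matrices induced by the Euclidean norm on `ℂ^d`. -/
noncomputable def opNorm {d : ℕ} (A : Matrix (Fin d) (Fin d) ℂ) : ℝ :=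
  ‖Matrix.toEuclideanCLM (𝕜 := ℂ) A‖

/-- Spectral radius of a complex matrix, as a real number. -/
noncomputable def specRad {d : ℕ} (A : Matrix (Fin d) (Fin d) ℂ) : ℝ :=
  (spectralRadius ℂ A).toReal

/-- `prodS S x n = S_{i_n} ⋯ S_{i_1}` where `i_k = x (k-1)`. -/
noncomputable def prodS {d : ℕ} {I : Type*} (S : I → Matrix (Fin d) (Fin d) ℂ)
    (x : ℕ → I) : ℕ → Matrix (Fin d) (Fin d) ℂ
  | 0 => 1
  | n + 1 => S (x n) * prodS S x n

/-- `Λ` is invariant under the one-sided shift `θ₊`. -/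
def ShiftInv {I : Type*} (Λ : Set (ℕ → I)) : Prop :=
  ∀ x ∈ Λ, (fun n => x (n + 1)) ∈ Λ

/-!
If every product of consecutive factors of a long product of `d × d` matrices is nilpotent, the
product vanishes. Nilpotency is the vanishing of the coefficients of characteristic polynomials, so
the Nullstellensatz turns this into an inequality: a product of `N` contractions all of whose
consecutive subproducts have spectral radius at most `κ ≤ 1` satisfies `‖·‖ ^ p ≤ C * κ`.

Kingman's theorem gives the limit `u` of `‖Aₙ‖ ^ (1 / n)`. Suppose that the spectral radii grow at a
rate smaller than `u` on a set of positive measure. After rescaling, all long products started from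
a set `F` of positive measure are contractions with spectral radius at most `q ^ n`, whereas their
norms decay slower than `t ^ n`, with `t < 1` as close to `1` as we like. By Birkhoff's theorem the
orbit of some point of `F` returns to `F` with positive frequency, so its first `n` factors can be
cut at return times into a bounded number of blocks of length comparable to `n`. The inequality
applied to these blocks contradicts the slow decay of the norm.
-/

/-- The product `B (i + n - 1) * ⋯ * B (i + 1) * B i` of `n` consecutive terms of a sequence in a
noncommutative monoid, later terms standing on the left. -/
def segProd {R : Type*} [Monoid R] (B : ℕ → R) (i : ℕ) : ℕ → R
  | 0 => 1
  | n + 1 => B (i + n) * segProd B i n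

section SegProd

variable {R R' : Type*} [Monoid R] [Monoid R']

@[simp]
theorem segProd_zero (B : ℕ → R) (i : ℕ) : segProd B i 0 = 1 := rfl

theorem segProd_succ (B : ℕ → R) (i n : ℕ) :
    segProd B i (n + 1) = B (i + n) * segProd B i n := rfl

@[simp]
theorem segProd_one (B : ℕ → R) (i : ℕ) : segProd B i 1 = B i := by
  simp [segProd_succ]

theorem segProd_add (B : ℕ → R) (i m n : ℕ) :
    segProd B i (m + n) = segProd B (i + m) n * segProd B i m := by
  induction n with
  | zero => simp
  | succ n ih => simp only [← add_assoc, segProd_succ, ih, mul_assoc]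

theorem segProd_shift (B : ℕ → R) (k i n : ℕ) :
    segProd (fun j => B (k + j)) i n = segProd B (k + i) n := by
  induction n with
  | zero => rfl
  | succ n ih => simp only [segProd_succ, ih, add_assoc]

theorem segProd_congr {B B' : ℕ → R} {i n : ℕ} (h : ∀ j ∈ Set.Ico i (i + n), B j = B' j) :
    segProd B i n = segProd B' i n := by
  induction n with
  | zero => rfl
  | succ n ih =>
    have hinit : ∀ j ∈ Set.Ico i (i + n), B j = B' j := fun j hj => h j ⟨hj.1, by grind⟩
    rw [segProd_succ, segProd_succ, ih hinit, h (i + n) ⟨by omega, by omega⟩]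

theorem map_segProd (f : R →* R') (B : ℕ → R) (i n : ℕ) :
    f (segProd B i n) = segProd (fun j => f (B j)) i n := by
  induction n with
  | zero => simp
  | succ n ih => simp only [segProd_succ, map_mul, ih]

theorem segProd_smul {K A : Type*} [CommSemiring K] [Semiring A] [Algebra K A] (c : K)
    (B : ℕ → A) (i n : ℕ) : segProd (fun j => c • B j) i n = c ^ n • segProd B i n := by
  induction n with
  | zero => simp
  | succ n ih => simp only [segProd_succ, ih, smul_mul_smul_comm, pow_succ']

theorem segProd_blocks (B : ℕ → R) {s : ℕ → ℕ} {i n : ℕ} (hs : MonotoneOn s (Set.Icc i (i + n))) :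
    segProd (fun j => segProd B (s j) (s (j + 1) - s j)) i n
      = segProd B (s i) (s (i + n) - s i) := by
  induction n with
  | zero => simp
  | succ n ih =>
    have hle : s i ≤ s (i + n) := hs (by simp) (by simp) (by simp)
    have hle' : s (i + n) ≤ s (i + n + 1) := hs (by simp) (by simp [add_assoc]) (by simp)
    have hsplit : s (i + (n + 1)) - s i = (s (i + n) - s i) + (s (i + n + 1) - s (i + n)) := by
      rw [← add_assoc i n 1]; omega
    rw [segProd_succ, ih (hs.mono (Set.Icc_subset_Icc_right (by omega))), hsplit, segProd_add,
      Nat.add_sub_cancel' hle]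

theorem segProd_segProd_mul (B : ℕ → R) (m i n : ℕ) :
    segProd (fun j => segProd B (j * m) m) i n = segProd B (i * m) (n * m) := by
  have h := segProd_blocks B (s := fun j => j * m) (i := i) (n := n)
    fun a _ b _ hab => Nat.mul_le_mul_right m hab
  simpa only [add_mul, one_mul, Nat.add_sub_cancel_left] using h

end SegProd

section NilpotentProducts

theorem segProd_ne_zero {R : Type*} [MonoidWithZero R] [NoZeroDivisors R] [Nontrivial R]
    {B : ℕ → R} {i k : ℕ} (h : ∀ j ∈ Set.Ico i (i + k), B j ≠ 0) : segProd B i k ≠ 0 := by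
  induction k with
  | zero => simp
  | succ k ih =>
    exact mul_ne_zero (h _ (by simp)) (ih fun j hj => h j ⟨hj.1, by grind⟩)

theorem segProd_mul_eq {R m n : Type*} [Semiring R] [Fintype m] [DecidableEq m] [Fintype n]
    [DecidableEq n] (X : ℕ → Matrix m n R) (Y : ℕ → Matrix n m R) (i k : ℕ) :
    segProd (fun j => X j * Y j) i (k + 1)
      = X (i + k) * segProd (fun j => Y (j + 1) * X j) i k * Y i := by
  induction k with
  | zero => simp
  | succ k ih =>
    rw [segProd_succ, ih, segProd_succ]
    simp only [← add_assoc, Matrix.mul_assoc]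

theorem det_segProd {R n : Type*} [CommRing R] [Fintype n] [DecidableEq n] (B : ℕ → Matrix n n R)
    (i k : ℕ) : (segProd B i k).det = segProd (fun j => (B j).det) i k :=
  map_segProd Matrix.detMonoidHom B i k

theorem isNilpotent_mul_swap {R m n : Type*} [Semiring R] [Fintype m] [DecidableEq m] [Fintype n]
    [DecidableEq n] {X : Matrix m n R} {Y : Matrix n m R} (h : IsNilpotent (X * Y)) :
    IsNilpotent (Y * X) := by
  obtain ⟨k, hk⟩ := h
  have hpow (l : ℕ) : (Y * X) ^ (l + 1) = Y * ((X * Y) ^ l * X) := by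
    induction l with
    | zero => simp
    | succ l ih => rw [pow_succ', ih, pow_succ']; simp only [Matrix.mul_assoc]
  exact ⟨k + 1, by rw [hpow, hk, Matrix.zero_mul, Matrix.mul_zero]⟩

theorem det_eq_zero_of_isNilpotent {R n : Type*} [CommRing R] [IsReduced R] [Fintype n]
    [DecidableEq n] [Nonempty n] {A : Matrix n n R} (h : IsNilpotent A) : A.det = 0 := by
  obtain ⟨k, hk⟩ := h
  exact IsNilpotent.eq_zero ⟨k, by rw [← Matrix.det_pow, hk, Matrix.det_zero]⟩

variable {K : Type*} [Field K] {n : Type*} [Fintype n]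

theorem exists_eq_mul_of_rank_le {m : Type*} {r : ℕ} (D : Matrix m n K) (h : D.rank ≤ r) :
    ∃ (X : Matrix m (Fin r) K) (Y : Matrix (Fin r) n K), D = X * Y := by
  classical
  set f := D.mulVecLin
  have hr : Module.finrank K (LinearMap.range f) ≤ Module.finrank K (Fin r → K) := by
    rwa [Module.finrank_fin_fun]
  obtain ⟨ι, hι⟩ := finrank_le_iff_exists_linearMap.1 hr
  obtain ⟨g, hg⟩ := LinearMap.exists_leftInverse_of_injective ι (LinearMap.ker_eq_bot.2 hι)
  have hfactor : ((LinearMap.range f).subtype ∘ₗ g) ∘ₗ (ι ∘ₗ f.rangeRestrict) = f :=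
    LinearMap.ext fun x => congrArg Subtype.val (LinearMap.congr_fun hg (f.rangeRestrict x))
  refine ⟨LinearMap.toMatrix' ((LinearMap.range f).subtype ∘ₗ g),
    LinearMap.toMatrix' (ι ∘ₗ f.rangeRestrict), ?_⟩
  rw [← LinearMap.toMatrix'_comp, hfactor]
  exact (LinearMap.toMatrix'_toLin' D).symm

theorem card_le_finrank_of_triangular {V : Type*} [AddCommGroup V] [Module K V]
    [FiniteDimensional K V] {M : ℕ} (v : Fin M → V) (f : Fin M → Module.Dual K V)
    (hdiag : ∀ i, f i (v i) ≠ 0) (hzero : ∀ i j, i < j → f j (v i) = 0) :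
    M ≤ Module.finrank K V := by
  let G : Matrix (Fin M) (Fin M) K := fun i j => f j (v i)
  have hdet : G.det ≠ 0 := by
    rw [Matrix.det_of_isLowerTriangular G fun _ _ => hzero _ _]
    exact Finset.prod_ne_zero_iff.2 fun i _ => hdiag i
  have hindep : LinearIndependent K v := by
    refine Fintype.linearIndependent_iff.2 fun c hc => ?_
    suffices c = 0 from congrFun this
    refine Matrix.eq_zero_of_vecMul_eq_zero hdet (funext fun j => ?_)
    simpa [Matrix.vecMul, dotProduct, G] using congrArg (f j) hc
  simpa using hindep.fintype_card_le_finrank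

/- `det (Y i * X j)` is the value at the columns of `X j` of a multilinear form that depends only on
`Y i`, so these determinants are a triangular pairing. -/
theorem le_finrank_multilinearMap_of_det_mul {r M : ℕ} (X : ℕ → Matrix n (Fin r) K)
    (Y : ℕ → Matrix (Fin r) n K) (hne : ∀ j < M, (Y (j + 1) * X j).det ≠ 0)
    (hzero : ∀ i j, i ≤ j → j < M → (Y i * X j).det = 0) :
    M ≤ Module.finrank K (MultilinearMap K (fun _ : Fin r => n → K) K) := by
  let detForm (i : ℕ) : MultilinearMap K (fun _ : Fin r => n → K) K :=
    (Matrix.detRowAlternating (R := K) (n := Fin r)).toMultilinearMap.compLinearMap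
      fun _ => (Y i).mulVecLin
  let evalAt (j : ℕ) : Module.Dual K (MultilinearMap K (fun _ : Fin r => n → K) K) :=
    { toFun := fun g => g (X j).transpose, map_add' := fun _ _ => rfl, map_smul' := fun _ _ => rfl }
  have heval (i j : ℕ) : evalAt j (detForm i) = (Y i * X j).det := by
    rw [← Matrix.det_transpose]; rfl
  refine card_le_finrank_of_triangular (fun i => detForm (i + 1)) (fun j => evalAt j)
    (fun i => ?_) fun i j hij => ?_
  · exact heval _ _ ▸ hne i i.2
  · exact heval _ _ ▸ hzero _ _ hij j.2

variable [DecidableEq n]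

theorem rank_lt_card_of_det_eq_zero {A : Matrix n n K} (h : A.det = 0) :
    A.rank < Fintype.card n := by
  refine lt_of_le_of_ne A.rank_le_card_width fun hrank => ?_
  have hrange : LinearMap.range A.mulVecLin = ⊤ :=
    Submodule.eq_top_of_finrank_eq <| by
      rw [← Matrix.rank, hrank, Module.finrank_fintype_fun_eq_card]
  have hunit := (Matrix.isUnit_iff_isUnit_det A).1
    (Matrix.mulVec_surjective_iff_isUnit.1 (LinearMap.range_eq_top.1 hrange))
  exact hunit.ne_zero h

theorem rank_segProd_mul_lt_of_det_eq_zero {r M j : ℕ} (X : ℕ → Matrix n (Fin r) K)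
    (Y : ℕ → Matrix (Fin r) n K) (hj : j < M) (h : (Y (j + 1) * X j).det = 0) :
    (segProd (fun j => X j * Y j) 0 (M + 1)).rank < r := by
  have hsplit : M + 1 = j + 2 + (M - (j + 1)) := by omega
  have hpair : segProd (fun j => X j * Y j) 0 (j + 2)
      = X (j + 1) * (Y (j + 1) * X j * (Y j * segProd (fun j => X j * Y j) 0 j)) := by
    simp only [segProd_succ, zero_add, Matrix.mul_assoc]
  rw [hsplit, segProd_add, hpair]
  calc _ ≤ (Y (j + 1) * X j).rank :=
        (Matrix.rank_mul_le_right _ _).trans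
          ((Matrix.rank_mul_le_right _ _).trans (Matrix.rank_mul_le_left _ _))
    _ < r := by simpa using rank_lt_card_of_det_eq_zero h

/- Write `D j = X j * Y j` through `K ^ r`. If the rank does not drop, all `Y (j + 1) * X j` are
invertible, and then nilpotency of the products forces `det (Y i * X j) = 0` for `i ≤ j`. -/
theorem rank_segProd_lt {r M : ℕ} (hr : 0 < r)
    (hM : Module.finrank K (MultilinearMap K (fun _ : Fin r => n → K) K) < M)
    {D : ℕ → Matrix n n K} (hrank : ∀ j ≤ M, (D j).rank ≤ r)
    (hnil : ∀ i k, i + k ≤ M → IsNilpotent (segProd D i (k + 1))) :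
    (segProd D 0 (M + 1)).rank < r := by
  have : Nonempty (Fin r) := ⟨⟨0, hr⟩⟩
  choose! X Y hXY using fun j hj => exists_eq_mul_of_rank_le (D j) (hrank j hj)
  have hfactor (i k : ℕ) (hik : i + k ≤ M) :
      segProd D i (k + 1) = segProd (fun j => X j * Y j) i (k + 1) :=
    segProd_congr fun j hj => hXY j (by grind)
  rw [hfactor 0 M (by omega)]
  by_contra! hcon
  have hne (j : ℕ) (hj : j < M) : (Y (j + 1) * X j).det ≠ 0 := fun h =>
    hcon.not_gt (rank_segProd_mul_lt_of_det_eq_zero X Y hj h)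
  refine hM.not_ge (le_finrank_multilinearMap_of_det_mul X Y hne fun i j hij hj => ?_)
  obtain ⟨k, rfl⟩ := Nat.exists_eq_add_of_le hij
  have hnil' := hnil i k hj.le
  rw [hfactor i k hj.le, segProd_mul_eq, Matrix.mul_assoc] at hnil'
  have hdet := det_eq_zero_of_isNilpotent (isNilpotent_mul_swap hnil')
  rw [Matrix.mul_assoc, Matrix.det_mul, det_segProd] at hdet
  exact (mul_eq_zero.1 hdet).resolve_left (segProd_ne_zero fun j hj' => hne j (by grind))

theorem exists_forall_rank_segProd_le (K : Type*) [Field K] (n : Type*) [Fintype n]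
    [DecidableEq n] (k : ℕ) :
    ∃ N, 0 < N ∧ ∀ B : ℕ → Matrix n n K,
      (∀ i j, i + j < N → IsNilpotent (segProd B i (j + 1))) →
        (segProd B 0 N).rank ≤ Fintype.card n - k := by
  induction k with
  | zero => exact ⟨1, one_pos, fun B _ => Matrix.rank_le_card_width _⟩
  | succ k ih =>
    obtain ⟨N, hN, hrank⟩ := ih
    rcases Nat.eq_zero_or_pos (Fintype.card n - k) with hr | hr
    · exact ⟨N, hN, fun B hB => (hrank B hB).trans (by omega)⟩
    set r := Fintype.card n - k
    set M := Module.finrank K (MultilinearMap K (fun _ : Fin r => n → K) K) + 1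
    refine ⟨(M + 1) * N, by positivity, fun B hB => ?_⟩
    have hlt : (segProd (fun j => segProd B (j * N) N) 0 (M + 1)).rank < r := by
      refine rank_segProd_lt hr (Nat.lt_succ_self _) (fun j hj => ?_) fun i l hil => ?_
      · have hshift := hrank (fun l => B (j * N + l)) fun a b hab => by
          have hle : (j + 1) * N ≤ (M + 1) * N := Nat.mul_le_mul_right _ (by omega)
          rw [segProd_shift]
          exact hB _ _ (by linarith)
        rwa [segProd_shift, add_zero] at hshift
      · have hle : (i + (l + 1)) * N ≤ (M + 1) * N := Nat.mul_le_mul_right _ (by omega)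
        obtain ⟨p, hp⟩ := Nat.exists_eq_succ_of_ne_zero (Nat.mul_pos l.succ_pos hN).ne'
        rw [segProd_segProd_mul, hp]
        exact hB _ _ (by rw [add_mul, hp] at hle; omega)
    rw [segProd_segProd_mul, zero_mul] at hlt
    omega

theorem exists_segProd_eq_zero_of_isNilpotent (K : Type*) [Field K] (n : Type*) [Fintype n]
    [DecidableEq n] :
    ∃ N, ∀ B : ℕ → Matrix n n K,
      (∀ i j, i + j < N → IsNilpotent (segProd B i (j + 1))) → segProd B 0 N = 0 := by
  obtain ⟨N, -, hN⟩ := exists_forall_rank_segProd_le K n (Fintype.card n)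
  refine ⟨N, fun B hB => ?_⟩
  obtain ⟨X, Y, hXY⟩ := exists_eq_mul_of_rank_le (r := 0) _ (Nat.sub_self _ ▸ hN B hB)
  rw [hXY]
  ext i j
  simp [Matrix.mul_apply]

end NilpotentProducts

section PolynomialBounds

open MvPolynomial

theorem exists_norm_aeval_le {𝕜 σ : Type*} [NormedField 𝕜] (q : MvPolynomial σ 𝕜) :
    ∃ C : ℝ, 0 ≤ C ∧ ∀ v : σ → 𝕜, (∀ i, ‖v i‖ ≤ 1) → ‖aeval v q‖ ≤ C := by
  induction q using MvPolynomial.induction_on with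
  | C a => exact ⟨‖a‖, norm_nonneg _, fun v _ => by simp⟩
  | add p q hp hq =>
    obtain ⟨C₁, hC₁, hp⟩ := hp
    obtain ⟨C₂, hC₂, hq⟩ := hq
    refine ⟨C₁ + C₂, by positivity, fun v hv => ?_⟩
    rw [map_add]
    exact norm_add_le_of_le (hp v hv) (hq v hv)
  | mul_X p i hp =>
    obtain ⟨C, hC, hp⟩ := hp
    refine ⟨C, hC, fun v hv => ?_⟩
    rw [map_mul, norm_mul, aeval_X]
    exact (mul_le_of_le_one_right (norm_nonneg _) (hv i)).trans (hp v hv)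

theorem exists_norm_aeval_le_mul_of_mem_span {𝕜 σ : Type*} [NormedField 𝕜]
    {s : Set (MvPolynomial σ 𝕜)} {q : MvPolynomial σ 𝕜} (hq : q ∈ Ideal.span s) :
    ∃ C : ℝ, 0 ≤ C ∧ ∀ v : σ → 𝕜, (∀ i, ‖v i‖ ≤ 1) → ∀ κ : ℝ,
      (∀ t ∈ s, ‖aeval v t‖ ≤ κ) → 0 ≤ κ → ‖aeval v q‖ ≤ C * κ := by
  induction hq using Submodule.span_induction with
  | mem q hq => exact ⟨1, zero_le_one, fun v _ κ h _ => by simpa using h q hq⟩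
  | zero => exact ⟨0, le_rfl, fun v _ κ _ _ => by simp⟩
  | add p q _ _ hp hq =>
    obtain ⟨C₁, hC₁, hp⟩ := hp
    obtain ⟨C₂, hC₂, hq⟩ := hq
    refine ⟨C₁ + C₂, by positivity, fun v hv κ h hκ => ?_⟩
    rw [map_add, add_mul]
    exact norm_add_le_of_le (hp v hv κ h hκ) (hq v hv κ h hκ)
  | smul a q _ hq =>
    obtain ⟨C₁, hC₁, ha⟩ := exists_norm_aeval_le a
    obtain ⟨C₂, hC₂, hq⟩ := hq
    refine ⟨C₁ * C₂, by positivity, fun v hv κ h hκ => ?_⟩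
    rw [smul_eq_mul, map_mul, norm_mul, mul_assoc]
    exact mul_le_mul (ha v hv) (hq v hv κ h hκ) (norm_nonneg _) hC₁

theorem exists_norm_aeval_pow_le_mul {𝕜 σ : Type*} [NormedField 𝕜] [IsAlgClosed 𝕜] [Finite σ]
    (s : Set (MvPolynomial σ 𝕜)) :
    ∃ p, p ≠ 0 ∧ ∀ q : MvPolynomial σ 𝕜,
      (∀ v : σ → 𝕜, (∀ t ∈ s, aeval v t = 0) → aeval v q = 0) →
      ∃ C : ℝ, 0 ≤ C ∧ ∀ v : σ → 𝕜, (∀ i, ‖v i‖ ≤ 1) → ∀ κ : ℝ,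
        (∀ t ∈ s, ‖aeval v t‖ ≤ κ) → 0 ≤ κ → ‖aeval v q‖ ^ p ≤ C * κ := by
  obtain ⟨p, hp⟩ := (Ideal.span s).exists_radical_pow_le_of_fg (IsNoetherian.noetherian _)
  refine ⟨p + 1, p.succ_ne_zero, fun q hq => ?_⟩
  have hrad : q ∈ (Ideal.span s).radical := by
    rw [← vanishingIdeal_zeroLocus_eq_radical (K := 𝕜), mem_vanishingIdeal_iff, zeroLocus_span]
    exact hq
  have hpow : q ^ (p + 1) ∈ Ideal.span s :=
    hp (Ideal.pow_le_pow_right p.le_succ (Ideal.pow_mem_pow hrad _))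
  simpa only [map_pow, norm_pow] using exists_norm_aeval_le_mul_of_mem_span hpow

end PolynomialBounds

local notation "ρ(" a ")" => ENNReal.toReal (spectralRadius ℂ a)

section SpectralRadius

variable {R : Type*} [NormedRing R] [NormedAlgebra ℂ R] [CompleteSpace R]

theorem spectralRadius_ne_top (a : R) : spectralRadius ℂ a ≠ ⊤ := by
  refine ne_top_of_le_ne_top (ENNReal.coe_ne_top (r := ‖a‖₊ * ‖(1 : R)‖₊)) (iSup₂_le fun z hz => ?_)
  exact_mod_cast spectrum.norm_le_norm_mul_of_mem hz

theorem norm_le_toReal_spectralRadius {a : R} {z : ℂ} (hz : z ∈ spectrum ℂ a) : ‖z‖ ≤ ρ(a) := by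
  have hle : (‖z‖₊ : ENNReal) ≤ spectralRadius ℂ a :=
    le_iSup₂ (f := fun k (_ : k ∈ spectrum ℂ a) => (‖k‖₊ : ENNReal)) z hz
  simpa using ENNReal.toReal_mono (spectralRadius_ne_top a) hle

theorem tendsto_norm_pow_rpow_spectralRadius (a : R) :
    Tendsto (fun n : ℕ => ‖a ^ n‖ ^ (1 / (n : ℝ))) atTop (𝓝 ρ(a)) := by
  have hlim := (ENNReal.tendsto_toReal (spectralRadius_ne_top a)).comp
    (spectrum.pow_nnnorm_pow_one_div_tendsto_nhds_spectralRadius a)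
  refine hlim.congr fun n => ?_
  rw [Function.comp_apply, ← ENNReal.toReal_rpow, ENNReal.coe_toReal, coe_nnnorm]

theorem toReal_spectralRadius_le_norm (a : R) : ρ(a) ≤ ‖a‖ := by
  refine le_of_tendsto (tendsto_norm_pow_rpow_spectralRadius a) ?_
  filter_upwards [eventually_gt_atTop 0] with n hn
  calc ‖a ^ n‖ ^ (1 / (n : ℝ)) ≤ (‖a‖ ^ n) ^ (1 / (n : ℝ)) := by
        gcongr; exact norm_pow_le' a hn
    _ = ‖a‖ := by rw [one_div, Real.pow_rpow_inv_natCast (norm_nonneg _) hn.ne']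

theorem toReal_spectralRadius_smul (c : ℂ) (a : R) : ρ(c • a) = ‖c‖ * ρ(a) := by
  refine tendsto_nhds_unique (tendsto_norm_pow_rpow_spectralRadius (c • a)) ?_
  refine ((tendsto_norm_pow_rpow_spectralRadius a).const_mul ‖c‖).congr' ?_
  filter_upwards [eventually_gt_atTop 0] with n hn
  rw [smul_pow, norm_smul, Real.mul_rpow (norm_nonneg _) (norm_nonneg _), norm_pow c, one_div,
    Real.pow_rpow_inv_natCast (norm_nonneg _) hn.ne']

theorem stronglyMeasurable_toReal_spectralRadius {X : Type*} [MeasurableSpace X] {f : X → R}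
    (hf : StronglyMeasurable f) : StronglyMeasurable fun x => ρ(f x) := by
  refine stronglyMeasurable_of_tendsto atTop (f := fun (n : ℕ) x => ‖f x ^ n‖ ^ (1 / (n : ℝ)))
    (fun n => ?_) (tendsto_pi_nhds.2 fun x => tendsto_norm_pow_rpow_spectralRadius (f x))
  exact ((hf.pow n).norm.measurable.pow_const _).stronglyMeasurable

end SpectralRadius

section CharpolyCoeff

variable {n : Type*} [Fintype n] [DecidableEq n]

theorem isNilpotent_of_charpoly_coeff_eq_zero {R : Type*} [CommRing R] [Nontrivial R]
    {A : Matrix n n R} (h : ∀ k < Fintype.card n, A.charpoly.coeff k = 0) : IsNilpotent A := by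
  have hX : A.charpoly = Polynomial.X ^ Fintype.card n := by
    rw [A.charpoly_monic.as_sum, A.charpoly_natDegree_eq_dim, add_eq_left]
    exact Finset.sum_eq_zero fun k hk => by rw [h k (Finset.mem_range.1 hk), map_zero, zero_mul]
  exact ⟨Fintype.card n, by simpa [hX] using A.aeval_self_charpoly⟩

open scoped Matrix.Norms.L2Operator

theorem norm_charpoly_coeff_le (A : Matrix n n ℂ) (k : ℕ) :
    ‖A.charpoly.coeff k‖ ≤ ρ(A) ^ (Fintype.card n - k) * (Fintype.card n).choose k := by
  have hroots : ∀ z ∈ (A.charpoly.map (RingHom.id ℂ)).roots, ‖z‖ ≤ ρ(A) := fun z hz =>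
    norm_le_toReal_spectralRadius <| Matrix.mem_spectrum_of_isRoot_charpoly <|
      Polynomial.isRoot_of_mem_roots (by rwa [Polynomial.map_id] at hz)
  simpa only [Polynomial.map_id, Matrix.charpoly_natDegree_eq_dim] using
    Polynomial.coeff_le_of_roots_le k A.charpoly_monic (IsAlgClosed.splits _) hroots

theorem norm_charpoly_coeff_le_of_spectralRadius_le {A : Matrix n n ℂ} {κ : ℝ} (hκ : κ ≤ 1)
    (hρ : ρ(A) ≤ κ) {k : ℕ} (hk : k < Fintype.card n) :
    ‖A.charpoly.coeff k‖ ≤ 2 ^ Fintype.card n * κ := by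
  have hκ₀ : 0 ≤ κ := ENNReal.toReal_nonneg.trans hρ
  calc ‖A.charpoly.coeff k‖ ≤ ρ(A) ^ (Fintype.card n - k) * (Fintype.card n).choose k :=
        norm_charpoly_coeff_le A k
    _ ≤ κ * 2 ^ Fintype.card n := by
        gcongr
        · exact (pow_le_pow_left₀ ENNReal.toReal_nonneg hρ _).trans
            (pow_le_of_le_one hκ₀ hκ (by omega))
        · exact_mod_cast Nat.choose_le_two_pow _ k
    _ = 2 ^ Fintype.card n * κ := mul_comm _ _

theorem norm_entry_le_l2_opNorm (A : Matrix n n ℂ) (i j : n) : ‖A i j‖ ≤ ‖A‖ := by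
  have hcol : ‖WithLp.toLp 2 (A.col j)‖ ≤ ‖A‖ := by
    simpa using A.l2_opNorm_mulVec (EuclideanSpace.single j 1)
  exact (PiLp.norm_apply_le (WithLp.toLp 2 (A.col j)) i).trans hcol

theorem exists_l2_opNorm_le_mul (n : Type*) [Fintype n] [DecidableEq n] :
    ∃ C : ℝ, ∀ (A : Matrix n n ℂ) (s : ℝ), 0 ≤ s → (∀ i j, ‖A i j‖ ≤ s) → ‖A‖ ≤ C * s := by
  let L := (Matrix.ofLinearEquiv ℂ : (n → n → ℂ) ≃ₗ[ℂ] Matrix n n ℂ).toContinuousLinearEquiv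
  refine ⟨‖(L : (n → n → ℂ) →L[ℂ] Matrix n n ℂ)‖, fun A s hs hA => ?_⟩
  refine ((L : (n → n → ℂ) →L[ℂ] Matrix n n ℂ).le_opNorm (Matrix.of.symm A)).trans ?_
  gcongr
  exact (pi_norm_le_iff_of_nonneg hs).2 fun i => (pi_norm_le_iff_of_nonneg hs).2 (hA i)

end CharpolyCoeff

/-- A product of `N` factors in the unit ball is small as soon as the spectral radii of all its
nonempty consecutive subproducts are small. This quantifies the vanishing of a product of `N`
factors whose consecutive subproducts are all nilpotent. -/
def SpectralProdBound (R : Type*) [NormedRing R] [NormedAlgebra ℂ R] (N p : ℕ) (C : ℝ) : Prop :=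
  ∀ (B : ℕ → R) (κ : ℝ), (∀ i < N, ‖B i‖ ≤ 1) → κ ≤ 1 →
    (∀ i j, i + j < N → ρ(segProd B i (j + 1)) ≤ κ) → 0 ≤ κ → ‖segProd B 0 N‖ ^ p ≤ C * κ

/-- The sequence of matrices whose first `N` terms have the entries listed by `v` and whose other
terms vanish. -/
def matrixSeq {R n : Type*} [Zero R] {N : ℕ} (v : Fin N × n × n → R) (k : ℕ) : Matrix n n R :=
  if h : k < N then Matrix.of fun a b => v (⟨k, h⟩, a, b) else 0

section SpectralProdBound

open MvPolynomial

variable {n : Type*} [Fintype n] [DecidableEq n]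

theorem map_aeval_segProd_matrixSeq {R : Type*} [CommRing R] {N : ℕ} (v : Fin N × n × n → R)
    (i j : ℕ) :
    (aeval v).mapMatrix (segProd (matrixSeq (X (R := R))) i j) = segProd (matrixSeq v) i j := by
  let evalMatrix : Matrix n n _ →ₐ[R] Matrix n n R := (aeval v).mapMatrix
  refine (map_segProd evalMatrix.toMonoidHom _ i j).trans (segProd_congr fun k _ => ?_)
  ext a b
  by_cases hk : k < N <;> simp [evalMatrix, matrixSeq, hk]

theorem aeval_charpoly_coeff_segProd_matrixSeq {R : Type*} [CommRing R] {N : ℕ}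
    (v : Fin N × n × n → R) (i j k : ℕ) :
    aeval v ((segProd (matrixSeq (X (R := R))) i j).charpoly.coeff k)
      = (segProd (matrixSeq v) i j).charpoly.coeff k := by
  have hmap := (segProd (matrixSeq (X (R := R))) i j).charpoly_map (aeval v).toRingHom
  rw [← map_aeval_segProd_matrixSeq v]
  exact ((congrArg (Polynomial.coeff · k) hmap).trans (Polynomial.coeff_map _ _)).symm

theorem segProd_matrixSeq_entries {R : Type*} [Semiring R] (B : ℕ → Matrix n n R) {N i j : ℕ}
    (hij : i + j ≤ N) :
    segProd (matrixSeq fun t : Fin N × n × n => B t.1 t.2.1 t.2.2) i j = segProd B i j :=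
  segProd_congr fun k hk => by
    ext; simp [matrixSeq, show k < N by grind]

open scoped Matrix.Norms.L2Operator

theorem exists_norm_entry_segProd_pow_le (n : Type*) [Fintype n] [DecidableEq n] :
    ∃ (N p : ℕ) (C : ℝ), p ≠ 0 ∧ 0 ≤ C ∧ ∀ (B : ℕ → Matrix n n ℂ) (κ : ℝ),
      (∀ i < N, ‖B i‖ ≤ 1) → κ ≤ 1 → (∀ i j, i + j < N → ρ(segProd B i (j + 1)) ≤ κ) → 0 ≤ κ →
        ∀ a b, ‖segProd B 0 N a b‖ ^ p ≤ C * κ := by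
  obtain ⟨N, hN⟩ := exists_segProd_eq_zero_of_isNilpotent ℂ n
  let coeffs : Set (MvPolynomial (Fin N × n × n) ℂ) :=
    {q | ∃ i j k, i + j < N ∧ k < Fintype.card n ∧
      q = (segProd (matrixSeq X) i (j + 1)).charpoly.coeff k}
  obtain ⟨p, hp, hbound⟩ := exists_norm_aeval_pow_le_mul coeffs
  have hentry (v : Fin N × n × n → ℂ) (a b : n) :
      aeval v (segProd (matrixSeq (X (R := ℂ))) 0 N a b) = segProd (matrixSeq v) 0 N a b := by
    rw [← map_aeval_segProd_matrixSeq v]; rfl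
  have hvanish (a b : n) (v : Fin N × n × n → ℂ) (hv : ∀ t ∈ coeffs, aeval v t = 0) :
      aeval v (segProd (matrixSeq (X (R := ℂ))) 0 N a b) = 0 := by
    have hnil : segProd (matrixSeq v) 0 N = 0 := hN _ fun i j hij =>
      isNilpotent_of_charpoly_coeff_eq_zero fun k hk => by
        rw [← aeval_charpoly_coeff_segProd_matrixSeq]
        exact hv _ ⟨i, j, k, hij, hk, rfl⟩
    rw [hentry, hnil, Matrix.zero_apply]
  choose C _ hC using fun ab : n × n => hbound _ (hvanish ab.1 ab.2)
  obtain ⟨D, hD⟩ := Finite.bddAbove_range C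
  refine ⟨N, p, max D 0 * 2 ^ Fintype.card n, hp, by positivity, fun B κ hB hκ₁ hρ hκ₀ a b => ?_⟩
  let v : Fin N × n × n → ℂ := fun t => B t.1 t.2.1 t.2.2
  have hκ : ∀ t ∈ coeffs, ‖aeval v t‖ ≤ 2 ^ Fintype.card n * κ := by
    rintro _ ⟨i, j, k, hij, hk, rfl⟩
    rw [aeval_charpoly_coeff_segProd_matrixSeq, segProd_matrixSeq_entries B hij]
    exact norm_charpoly_coeff_le_of_spectralRadius_le hκ₁ (hρ i j hij) hk
  have hv (t) : ‖v t‖ ≤ 1 := (norm_entry_le_l2_opNorm _ _ _).trans (hB _ t.1.2)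
  calc ‖segProd B 0 N a b‖ ^ p = ‖aeval v (segProd (matrixSeq (X (R := ℂ))) 0 N a b)‖ ^ p := by
        rw [hentry, segProd_matrixSeq_entries B (by omega)]
    _ ≤ C (a, b) * (2 ^ Fintype.card n * κ) := hC (a, b) v hv _ hκ (by positivity)
    _ ≤ max D 0 * (2 ^ Fintype.card n * κ) := by
        gcongr; exact le_max_of_le_left (hD (Set.mem_range_self _))
    _ = max D 0 * 2 ^ Fintype.card n * κ := (mul_assoc _ _ _).symm

theorem exists_spectralProdBound_matrix (n : Type*) [Fintype n] [DecidableEq n] :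
    ∃ (N p : ℕ) (C : ℝ), SpectralProdBound (Matrix n n ℂ) N p C := by
  obtain ⟨N, p, C, hp, hC, hentry⟩ := exists_norm_entry_segProd_pow_le n
  obtain ⟨D, hD⟩ := exists_l2_opNorm_le_mul n
  refine ⟨N, p, D ^ p * C, fun B κ hB hκ₁ hρ hκ₀ => ?_⟩
  have hCκ : 0 ≤ C * κ := by positivity
  have hnorm : ‖segProd B 0 N‖ ≤ D * (C * κ) ^ (p : ℝ)⁻¹ := hD _ _ (by positivity) fun a b =>
    (Real.le_rpow_inv_iff_of_pos (norm_nonneg _) hCκ (by positivity)).2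
      (by rw [Real.rpow_natCast]; exact hentry B κ hB hκ₁ hρ hκ₀ a b)
  calc ‖segProd B 0 N‖ ^ p ≤ (D * (C * κ) ^ (p : ℝ)⁻¹) ^ p := by gcongr
    _ = D ^ p * C * κ := by rw [mul_pow, Real.rpow_inv_natCast_pow hCκ hp, mul_assoc]

end SpectralProdBound

section GrowthRate

variable {X : Type*}

/-- The lower linear growth rate `liminf gₙ(x) / n` of a sequence of functions. -/
noncomputable def lowerRate (g : ℕ → X → ℝ) (x : X) : ℝ :=
  liminf (fun n : ℕ => g n x / n) atTop

/-- The upper linear growth rate `limsup gₙ(x) / n` of a sequence of functions. -/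
noncomputable def upperRate (g : ℕ → X → ℝ) (x : X) : ℝ :=
  limsup (fun n : ℕ => g n x / n) atTop

/-- The points at which none of the averages `gₙ / n`, `1 ≤ n ≤ k`, comes within `δ` of the lower
growth rate; the inequality is written without division. -/
def lateSet (g : ℕ → X → ℝ) (δ : ℝ) (k : ℕ) : Set X :=
  {x | ∀ n ∈ Set.Icc 1 k, n * (lowerRate g x + δ) < g n x}

theorem indicator_one_mem_Icc (F : Set X) (x : X) :
    F.indicator (1 : X → ℝ) x ∈ Set.Icc 0 1 :=
  ⟨Set.indicator_nonneg (fun _ _ => zero_le_one) x,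
    Set.indicator_le_self' (fun _ _ => zero_le_one) x⟩

theorem upperRate_birkhoffSum_eq_zero_of_forall_notMem {T : X → X} {F : Set X} {x : X}
    (h : ∀ m, T^[m] x ∉ F) : upperRate (birkhoffSum T (F.indicator 1)) x = 0 := by
  have hzero (n : ℕ) : birkhoffSum T (F.indicator (1 : X → ℝ)) n x = 0 :=
    Finset.sum_eq_zero fun i _ => Set.indicator_of_notMem (h i) _
  simp [upperRate, hzero]

variable [MeasurableSpace X]

/-- A process `g` over the dynamical system `T` which is measurable, subadditive along orbits, and
satisfies `0 ≤ gₙ ≤ K n`. -/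
structure IsBoundedSubadditive (T : X → X) (K : ℝ) (g : ℕ → X → ℝ) : Prop where
  measurable (n : ℕ) : Measurable (g n)
  nonneg (n : ℕ) (x : X) : 0 ≤ g n x
  le_mul (n : ℕ) (x : X) : g n x ≤ K * n
  add_le (m n : ℕ) (x : X) : g (m + n) x ≤ g m x + g n (T^[m] x)

namespace IsBoundedSubadditive

variable {T : X → X} {K : ℝ} {g : ℕ → X → ℝ}

theorem bound_nonneg (h : IsBoundedSubadditive T K g) (x : X) : 0 ≤ K := by
  simpa using (h.nonneg 1 x).trans (h.le_mul 1 x)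

theorem div_nonneg (h : IsBoundedSubadditive T K g) (x : X) (n : ℕ) : 0 ≤ g n x / n :=
  _root_.div_nonneg (h.nonneg n x) n.cast_nonneg

theorem div_le (h : IsBoundedSubadditive T K g) (x : X) (n : ℕ) : g n x / n ≤ K :=
  div_le_of_le_mul₀ n.cast_nonneg (h.bound_nonneg x) (h.le_mul n x)

theorem isBoundedUnder_le (h : IsBoundedSubadditive T K g) (x : X) :
    IsBoundedUnder (· ≤ ·) atTop (fun n : ℕ => g n x / n) :=
  isBoundedUnder_of ⟨K, h.div_le x⟩

theorem isBoundedUnder_ge (h : IsBoundedSubadditive T K g) (x : X) :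
    IsBoundedUnder (· ≥ ·) atTop (fun n : ℕ => g n x / n) :=
  isBoundedUnder_of ⟨0, h.div_nonneg x⟩

theorem lowerRate_nonneg (h : IsBoundedSubadditive T K g) (x : X) : 0 ≤ lowerRate g x :=
  le_liminf_of_le (h.isBoundedUnder_le x).isCoboundedUnder_ge (.of_forall (h.div_nonneg x))

theorem upperRate_le (h : IsBoundedSubadditive T K g) (x : X) : upperRate g x ≤ K :=
  limsup_le_of_le (h.isBoundedUnder_ge x).isCoboundedUnder_le (.of_forall (h.div_le x))

theorem lowerRate_le_upperRate (h : IsBoundedSubadditive T K g) (x : X) :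
    lowerRate g x ≤ upperRate g x :=
  liminf_le_limsup (h.isBoundedUnder_le x) (h.isBoundedUnder_ge x)

theorem lowerRate_mem_Icc (h : IsBoundedSubadditive T K g) (x : X) :
    lowerRate g x ∈ Set.Icc 0 K :=
  ⟨h.lowerRate_nonneg x, (h.lowerRate_le_upperRate x).trans (h.upperRate_le x)⟩

theorem upperRate_mem_Icc (h : IsBoundedSubadditive T K g) (x : X) :
    upperRate g x ∈ Set.Icc 0 K :=
  ⟨(h.lowerRate_nonneg x).trans (h.lowerRate_le_upperRate x), h.upperRate_le x⟩

theorem measurable_lowerRate (h : IsBoundedSubadditive T K g) : Measurable (lowerRate g) :=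
  .liminf fun n => (h.measurable n).div_const _

theorem measurable_upperRate (h : IsBoundedSubadditive T K g) : Measurable (upperRate g) :=
  .limsup fun n => (h.measurable n).div_const _

theorem measurableSet_lateSet (h : IsBoundedSubadditive T K g) (δ : ℝ) (k : ℕ) :
    MeasurableSet (lateSet g δ k) := by
  simp only [lateSet, Set.ofPred_forall]
  exact .iInter fun n => .iInter fun _ =>
    measurableSet_lt ((h.measurable_lowerRate.add_const δ).const_mul _) (h.measurable n)

theorem lowerRate_le_lowerRate_apply (h : IsBoundedSubadditive T K g) (x : X) :
    lowerRate g x ≤ lowerRate g (T x) := by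
  refine le_of_forall_lt_imp_le_of_dense fun c hc => ?_
  obtain ⟨c', hcc', hc'⟩ := exists_between hc
  have avg_succ : ∀ᶠ n : ℕ in atTop, c' < g (n + 1) x / ((n + 1 : ℕ) : ℝ) :=
    (tendsto_add_atTop_nat 1).eventually
      (eventually_lt_of_lt_liminf hc' (h.isBoundedUnder_ge x))
  have small : ∀ᶠ n : ℕ in atTop, K / (n : ℝ) < c' - c :=
    (tendsto_const_div_atTop_nhds_zero_nat K).eventually_lt_const (sub_pos.2 hcc')
  refine le_liminf_of_le (h.isBoundedUnder_le (T x)).isCoboundedUnder_ge ?_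
  filter_upwards [avg_succ, small, eventually_gt_atTop 0] with n hn hKn hn0
  have hn0 : (0 : ℝ) < n := by exact_mod_cast hn0
  have first_step : g (n + 1) x ≤ K + g n (T x) := by
    have hsub := h.add_le 1 n x
    have hone := h.le_mul 1 x
    rw [add_comm 1 n, Function.iterate_one] at hsub
    rw [Nat.cast_one, mul_one] at hone
    linarith
  have : g (n + 1) x / ((n + 1 : ℕ) : ℝ) ≤ K / n + g n (T x) / n :=
    calc g (n + 1) x / ((n + 1 : ℕ) : ℝ) ≤ g (n + 1) x / n :=
          div_le_div_of_nonneg_left (h.nonneg _ _) hn0 (by push_cast; linarith)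
      _ ≤ (K + g n (T x)) / n := by gcongr
      _ = K / n + g n (T x) / n := add_div ..
  linarith

theorem iInter_lateSet (h : IsBoundedSubadditive T K g) {δ : ℝ} (hδ : 0 < δ) :
    ⋂ k, lateSet g δ k = ∅ := by
  refine Set.eq_empty_of_forall_notMem fun x hx => ?_
  have hfreq : ∃ᶠ n : ℕ in atTop, g n x / n < lowerRate g x + δ :=
    frequently_lt_of_liminf_lt (h.isBoundedUnder_le x).isCoboundedUnder_ge
      (lt_add_of_pos_right _ hδ)
  obtain ⟨n, hn, hn0⟩ := (hfreq.and_eventually (eventually_gt_atTop 0)).exists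
  have hlate := Set.mem_iInter.1 hx n n ⟨hn0, le_rfl⟩
  rw [div_lt_iff₀ (by exact_mod_cast hn0)] at hn
  linarith

theorem tendsto_measureReal_lateSet (h : IsBoundedSubadditive T K g) (μ : Measure X)
    [IsFiniteMeasure μ] {δ : ℝ} (hδ : 0 < δ) :
    Tendsto (fun k => μ.real (lateSet g δ k)) atTop (𝓝 0) := by
  have hlim : Tendsto (μ ∘ lateSet g δ) atTop (𝓝 (μ (⋂ k, lateSet g δ k))) :=
    tendsto_measure_iInter_atTop (fun k => (h.measurableSet_lateSet δ k).nullMeasurableSet)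
      (fun a b hab x hx n hn => hx n ⟨hn.1, hn.2.trans hab⟩) ⟨0, measure_ne_top _ _⟩
  rw [h.iInter_lateSet hδ, measure_empty] at hlim
  exact (ENNReal.tendsto_toReal ENNReal.zero_ne_top).comp hlim

end IsBoundedSubadditive

end GrowthRate

section Invariance

variable {X : Type*} [MeasurableSpace X] {μ : Measure X} {T : X → X}

theorem integral_comp_of_measurePreserving (hT : MeasurePreserving T μ μ) {f : X → ℝ}
    (hf : Measurable f) : ∫ x, f (T x) ∂μ = ∫ x, f x ∂μ := by
  conv_rhs => rw [← hT.map_eq]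
  rw [integral_map hT.measurable.aemeasurable hf.aestronglyMeasurable]

theorem ae_iterate_eq_of_le_apply (hT : MeasurePreserving T μ μ) {f : X → ℝ} (hf : Measurable f)
    (hint : Integrable f μ) (hle : ∀ x, f x ≤ f (T x)) : ∀ᵐ x ∂μ, ∀ n, f (T^[n] x) = f x := by
  have apply_eq : ∀ᵐ x ∂μ, f x = f (T x) :=
    (integral_eq_iff_of_ae_le hint (hT.integrable_comp_of_integrable hint) (.of_forall hle)).1
      (integral_comp_of_measurePreserving hT hf).symm
  have along_orbit : ∀ᵐ x ∂μ, ∀ n, f (T^[n] x) = f (T (T^[n] x)) :=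
    ae_all_iff.2 fun n => (hT.iterate n).quasiMeasurePreserving.ae apply_eq
  filter_upwards [along_orbit] with x hx n
  induction n with
  | zero => rfl
  | succ n ih => rw [Function.iterate_succ_apply', ← hx, ih]

theorem measurable_birkhoffSum (hT : Measurable T) {f : X → ℝ} (hf : Measurable f) (n : ℕ) :
    Measurable (birkhoffSum T f n) :=
  Finset.measurable_fun_sum _ fun i _ => hf.comp (hT.iterate i)

theorem integral_birkhoffSum (hT : MeasurePreserving T μ μ) {f : X → ℝ} (hf : Measurable f)
    (hint : Integrable f μ) (n : ℕ) : ∫ x, birkhoffSum T f n x ∂μ = n * ∫ x, f x ∂μ := by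
  have hint_iterate : ∀ i ∈ Finset.range n, Integrable (fun x => f (T^[i] x)) μ := fun i _ =>
    (hT.iterate i).integrable_comp_of_integrable hint
  simp only [birkhoffSum]
  rw [integral_finsetSum _ hint_iterate,
    Finset.sum_congr rfl fun i _ => integral_comp_of_measurePreserving (hT.iterate i) hf]
  simp

theorem isBoundedSubadditive_birkhoffSum (hT : Measurable T) {f : X → ℝ} {K : ℝ}
    (hf : Measurable f) (hfK : ∀ x, f x ∈ Set.Icc 0 K) :
    IsBoundedSubadditive T K (birkhoffSum T f) where
  measurable := measurable_birkhoffSum hT hf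
  nonneg _ _ := Finset.sum_nonneg fun _ _ => (hfK _).1
  le_mul n x := by
    refine (Finset.sum_le_card_nsmul _ _ K fun i _ => (hfK _).2).trans_eq ?_
    rw [Finset.card_range, nsmul_eq_mul, mul_comm]
  add_le m n x := (birkhoffSum_add T f m n x).le

end Invariance

section ErgodicTheorems

variable {X : Type*} [MeasurableSpace X] {μ : Measure X} [IsProbabilityMeasure μ] {T : X → X}
  {K : ℝ} {g : ℕ → X → ℝ}

namespace IsBoundedSubadditive

theorem exists_le_add_birkhoffSum_lateSet (h : IsBoundedSubadditive T K g) {δ : ℝ} (hδ : 0 ≤ δ)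
    (k : ℕ) (x : X) : ∃ m ∈ Set.Icc 1 (max 1 k), g m x ≤
      m * (lowerRate g x + δ) + K * birkhoffSum T ((lateSet g δ k).indicator 1) m x := by
  have hK := h.bound_nonneg x
  by_cases hx : x ∈ lateSet g δ k
  · refine ⟨1, ⟨le_rfl, le_max_left _ _⟩, (h.le_mul 1 x).trans ?_⟩
    rw [birkhoffSum_one, Set.indicator_of_mem hx, Pi.one_apply, Nat.cast_one]
    linarith [h.lowerRate_nonneg x]
  · simp only [lateSet, Set.mem_ofPred_eq, not_forall, not_lt] at hx
    obtain ⟨m, hm, hle⟩ := hx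
    have hsum : 0 ≤ birkhoffSum T ((lateSet g δ k).indicator (1 : X → ℝ)) m x :=
      Finset.sum_nonneg fun i _ => (indicator_one_mem_Icc _ _).1
    exact ⟨m, ⟨hm.1, hm.2.trans (le_max_right _ _)⟩,
      hle.trans (le_add_of_nonneg_right (mul_nonneg hK hsum))⟩

/- Cover the orbit greedily by blocks on which `g` is close to its lower rate, paying `K` for every
visit to the late set and `K * k` for the last block. -/
theorem le_add_birkhoffSum_lateSet (h : IsBoundedSubadditive T K g) {δ : ℝ} (hδ : 0 ≤ δ)
    (k n : ℕ) (x : X) (hx : ∀ m, lowerRate g (T^[m] x) = lowerRate g x) :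
    g n x ≤ n * (lowerRate g x + δ) + K * birkhoffSum T ((lateSet g δ k).indicator 1) n x
      + K * k := by
  induction n using Nat.strong_induction_on generalizing x with
  | _ n ih =>
  have hK := h.bound_nonneg x
  rcases Nat.lt_or_ge k n with hkn | hnk
  · obtain ⟨m, hm, hgm⟩ := h.exists_le_add_birkhoffSum_lateSet hδ k x
    obtain ⟨r, rfl⟩ : ∃ r, n = m + r := Nat.exists_eq_add_of_le
      (hm.2.trans (max_le (Nat.one_le_of_lt hkn) hkn.le))
    have hrest := ih r (Nat.lt_add_of_pos_left hm.1) (T^[m] x) fun j => by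
      rw [← Function.iterate_add_apply, hx, hx]
    rw [hx] at hrest
    rw [birkhoffSum_add, Nat.cast_add]
    linarith [h.add_le m r x]
  · have hsum : 0 ≤ birkhoffSum T ((lateSet g δ k).indicator (1 : X → ℝ)) n x :=
      Finset.sum_nonneg fun i _ => (indicator_one_mem_Icc _ _).1
    have hlow := h.lowerRate_nonneg x
    calc g n x ≤ K * n := h.le_mul n x
      _ ≤ K * k := by gcongr
      _ ≤ _ := le_add_of_nonneg_left (by positivity)

theorem integrable (h : IsBoundedSubadditive T K g) (n : ℕ) : Integrable (g n) μ :=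
  .of_mem_Icc 0 (K * n) (h.measurable n).aemeasurable
    (.of_forall fun x => ⟨h.nonneg n x, h.le_mul n x⟩)

theorem integrable_lowerRate (h : IsBoundedSubadditive T K g) : Integrable (lowerRate g) μ :=
  .of_mem_Icc 0 K h.measurable_lowerRate.aemeasurable (.of_forall h.lowerRate_mem_Icc)

theorem integrable_upperRate (h : IsBoundedSubadditive T K g) : Integrable (upperRate g) μ :=
  .of_mem_Icc 0 K h.measurable_upperRate.aemeasurable (.of_forall h.upperRate_mem_Icc)

theorem ae_lowerRate_iterate (h : IsBoundedSubadditive T K g) (hT : MeasurePreserving T μ μ) :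
    ∀ᵐ x ∂μ, ∀ n, lowerRate g (T^[n] x) = lowerRate g x :=
  ae_iterate_eq_of_le_apply hT h.measurable_lowerRate h.integrable_lowerRate
    h.lowerRate_le_lowerRate_apply

theorem integral_le_add_measureReal_lateSet (h : IsBoundedSubadditive T K g)
    (hT : MeasurePreserving T μ μ) {δ : ℝ} (hδ : 0 ≤ δ) (k n : ℕ) :
    ∫ x, g n x ∂μ ≤
      n * ((∫ x, lowerRate g x ∂μ) + δ) + K * (n * μ.real (lateSet g δ k)) + K * k := by
  set ind : X → ℝ := (lateSet g δ k).indicator 1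
  have hind : Measurable ind := measurable_one.indicator (h.measurableSet_lateSet δ k)
  have hmem : ∀ x, ind x ∈ Set.Icc 0 1 := indicator_one_mem_Icc _
  have int_ind : Integrable ind μ := .of_mem_Icc 0 1 hind.aemeasurable (.of_forall hmem)
  have int_sum : Integrable (fun x => K * birkhoffSum T ind n x) μ :=
    ((isBoundedSubadditive_birkhoffSum hT.measurable hind hmem).integrable n).const_mul K
  have int_low : Integrable (fun x => n * (lowerRate g x + δ)) μ :=
    (h.integrable_lowerRate.add (integrable_const δ)).const_mul _
  calc ∫ x, g n x ∂μ
      ≤ ∫ x, (n * (lowerRate g x + δ) + K * birkhoffSum T ind n x + K * k) ∂μ := by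
        refine integral_mono_ae (h.integrable n)
          ((int_low.add int_sum).add (integrable_const _)) ?_
        filter_upwards [h.ae_lowerRate_iterate hT] with x hx
        exact h.le_add_birkhoffSum_lateSet hδ k n x hx
    _ = _ := by
        rw [integral_add (int_low.fun_add int_sum) (integrable_const _),
          integral_add int_low int_sum, integral_const_mul, integral_const_mul,
          integral_add h.integrable_lowerRate (integrable_const δ),
          integral_birkhoffSum hT hind int_ind,
          integral_indicator_one (h.measurableSet_lateSet δ k)]
        simp

theorem le_integral_lowerRate (h : IsBoundedSubadditive T K g) (hT : MeasurePreserving T μ μ)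
    {c : ℝ} (hc : ∀ n : ℕ, c * n ≤ ∫ x, g n x ∂μ) : c ≤ ∫ x, lowerRate g x ∂μ := by
  refine le_of_forall_pos_le_add fun δ hδ => ?_
  have bound (k : ℕ) : c ≤ (∫ x, lowerRate g x ∂μ) + δ + K * μ.real (lateSet g δ k) := by
    have hlim : Tendsto (fun n : ℕ => (∫ x, lowerRate g x ∂μ) + δ + K * μ.real (lateSet g δ k)
        + K * k / n) atTop (𝓝 _) :=
      tendsto_const_nhds.add (tendsto_const_div_atTop_nhds_zero_nat (K * k))
    rw [add_zero] at hlim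
    refine ge_of_tendsto hlim ?_
    filter_upwards [eventually_gt_atTop 0] with n hn
    have hn : (0 : ℝ) < n := by exact_mod_cast hn
    have := (hc n).trans (h.integral_le_add_measureReal_lateSet hT hδ.le k n)
    rw [← le_div_iff₀ hn] at this
    refine this.trans_eq ?_
    field_simp
  have hlim := ((h.tendsto_measureReal_lateSet μ hδ).const_mul K).const_add
    ((∫ x, lowerRate g x ∂μ) + δ)
  rw [mul_zero, add_zero] at hlim
  exact ge_of_tendsto' hlim bound

theorem ae_tendsto_of_integral_upperRate_le (h : IsBoundedSubadditive T K g)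
    (hle : ∫ x, upperRate g x ∂μ ≤ ∫ x, lowerRate g x ∂μ) :
    ∀ᵐ x ∂μ, Tendsto (fun n : ℕ => g n x / n) atTop (𝓝 (upperRate g x)) := by
  have rates_le := h.lowerRate_le_upperRate
  have integral_eq : ∫ x, lowerRate g x ∂μ = ∫ x, upperRate g x ∂μ :=
    (integral_mono h.integrable_lowerRate h.integrable_upperRate rates_le).antisymm hle
  have rates_eq := (integral_eq_iff_of_ae_le h.integrable_lowerRate h.integrable_upperRate
    (.of_forall rates_le)).1 integral_eq
  filter_upwards [rates_eq] with x hx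
  exact tendsto_of_liminf_eq_limsup hx rfl (h.isBoundedUnder_le x) (h.isBoundedUnder_ge x)

end IsBoundedSubadditive

theorem lowerRate_birkhoffSum_const_sub (hT : Measurable T) {f : X → ℝ} (hf : Measurable f)
    (hfK : ∀ x, f x ∈ Set.Icc 0 K) (x : X) :
    lowerRate (birkhoffSum T fun x => K - f x) x = K - upperRate (birkhoffSum T f) x := by
  have h := isBoundedSubadditive_birkhoffSum hT hf hfK
  unfold lowerRate upperRate
  rw [← liminf_const_sub atTop _ K (h.isBoundedUnder_le x)
    (h.isBoundedUnder_ge x).isCoboundedUnder_le]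
  refine liminf_congr ?_
  filter_upwards [eventually_gt_atTop 0] with n hn
  have hn : (n : ℝ) ≠ 0 := by exact_mod_cast hn.ne'
  simp only [birkhoffSum, Finset.sum_sub_distrib, Finset.sum_const, Finset.card_range,
    nsmul_eq_mul]
  rw [sub_div, mul_div_cancel_left₀ _ hn]

theorem integral_le_integral_lowerRate_birkhoffSum (hT : MeasurePreserving T μ μ) {f : X → ℝ}
    (hf : Measurable f) (hfK : ∀ x, f x ∈ Set.Icc 0 K) :
    ∫ x, f x ∂μ ≤ ∫ x, lowerRate (birkhoffSum T f) x ∂μ := by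
  refine (isBoundedSubadditive_birkhoffSum hT.measurable hf hfK).le_integral_lowerRate hT
    fun n => ?_
  rw [integral_birkhoffSum hT hf (.of_mem_Icc 0 K hf.aemeasurable (.of_forall hfK)), mul_comm]

theorem integral_upperRate_birkhoffSum_le (hT : MeasurePreserving T μ μ) {f : X → ℝ}
    (hf : Measurable f) (hfK : ∀ x, f x ∈ Set.Icc 0 K) :
    ∫ x, upperRate (birkhoffSum T f) x ∂μ ≤ ∫ x, f x ∂μ := by
  have h := isBoundedSubadditive_birkhoffSum hT.measurable hf hfK
  have reflected : ∫ x, (K - f x) ∂μ ≤ ∫ x, (K - upperRate (birkhoffSum T f) x) ∂μ := by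
    simp_rw [← lowerRate_birkhoffSum_const_sub hT.measurable hf hfK]
    exact integral_le_integral_lowerRate_birkhoffSum (K := K) hT (hf.const_sub K) fun x =>
      ⟨sub_nonneg.2 (hfK x).2, sub_le_self _ (hfK x).1⟩
  rwa [integral_sub (integrable_const _) (.of_mem_Icc 0 K hf.aemeasurable (.of_forall hfK)),
    integral_sub (integrable_const _) h.integrable_upperRate, sub_le_sub_iff_left] at reflected

theorem ae_tendsto_birkhoffSum_div (hT : MeasurePreserving T μ μ) {f : X → ℝ} (hf : Measurable f)
    (hfK : ∀ x, f x ∈ Set.Icc 0 K) :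
    ∀ᵐ x ∂μ, Tendsto (fun n : ℕ => birkhoffSum T f n x / n) atTop
      (𝓝 (upperRate (birkhoffSum T f) x)) :=
  (isBoundedSubadditive_birkhoffSum hT.measurable hf hfK).ae_tendsto_of_integral_upperRate_le <|
    (integral_upperRate_birkhoffSum_le hT hf hfK).trans
      (integral_le_integral_lowerRate_birkhoffSum hT hf hfK)

namespace IsBoundedSubadditive

theorem upperRate_le_add (h : IsBoundedSubadditive T K g) {δ : ℝ} (hδ : 0 ≤ δ) (k : ℕ) {x : X}
    {c : ℝ} (hx : ∀ n, lowerRate g (T^[n] x) = lowerRate g x)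
    (hc : Tendsto (fun n : ℕ => birkhoffSum T ((lateSet g δ k).indicator (1 : X → ℝ)) n x / n)
      atTop (𝓝 c)) :
    upperRate g x ≤ lowerRate g x + δ + K * c := by
  have hlim : Tendsto (fun n : ℕ => lowerRate g x + δ
      + K * (birkhoffSum T ((lateSet g δ k).indicator 1) n x / n) + K * k / n) atTop
      (𝓝 (lowerRate g x + δ + K * c)) := by
    simpa using ((hc.const_mul K).const_add (lowerRate g x + δ)).add
      (tendsto_const_div_atTop_nhds_zero_nat (K * k))
  rw [← hlim.limsup_eq]
  refine limsup_le_limsup ?_ (h.isBoundedUnder_ge x).isCoboundedUnder_le hlim.isBoundedUnder_le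
  filter_upwards [eventually_gt_atTop 0] with n hn
  have hn : (0 : ℝ) < n := by exact_mod_cast hn
  rw [div_le_iff₀ hn]
  refine (h.le_add_birkhoffSum_lateSet hδ k n x hx).trans_eq ?_
  field_simp

theorem integral_upperRate_le_add (h : IsBoundedSubadditive T K g) (hT : MeasurePreserving T μ μ)
    {δ : ℝ} (hδ : 0 ≤ δ) (k : ℕ) :
    ∫ x, upperRate g x ∂μ ≤ (∫ x, lowerRate g x ∂μ) + δ + K * μ.real (lateSet g δ k) := by
  have hlate := h.measurableSet_lateSet δ k
  set ind : X → ℝ := (lateSet g δ k).indicator 1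
  have hind : Measurable ind := measurable_one.indicator hlate
  have hmem : ∀ x, ind x ∈ Set.Icc 0 1 := indicator_one_mem_Icc _
  have int_freq : Integrable (upperRate (birkhoffSum T ind)) μ :=
    (isBoundedSubadditive_birkhoffSum hT.measurable hind hmem).integrable_upperRate
  have hK : 0 ≤ K := h.bound_nonneg (μ.nonempty_of_neZero.some)
  have int_low : Integrable (fun x => lowerRate g x + δ) μ :=
    h.integrable_lowerRate.add (integrable_const δ)
  calc ∫ x, upperRate g x ∂μ
      ≤ ∫ x, (lowerRate g x + δ + K * upperRate (birkhoffSum T ind) x) ∂μ := by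
        refine integral_mono_ae h.integrable_upperRate (int_low.add (int_freq.const_mul K)) ?_
        filter_upwards [h.ae_lowerRate_iterate hT, ae_tendsto_birkhoffSum_div hT hind hmem]
          with x hx hfreq
        exact h.upperRate_le_add hδ k hx hfreq
    _ = (∫ x, lowerRate g x ∂μ) + δ + K * ∫ x, upperRate (birkhoffSum T ind) x ∂μ := by
        rw [integral_add int_low (int_freq.const_mul K), integral_const_mul,
          integral_add h.integrable_lowerRate (integrable_const δ)]
        simp
    _ ≤ (∫ x, lowerRate g x ∂μ) + δ + K * μ.real (lateSet g δ k) := by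
        rw [← integral_indicator_one hlate]
        exact add_le_add_right
          (mul_le_mul_of_nonneg_left (integral_upperRate_birkhoffSum_le hT hind hmem) hK) _

theorem ae_tendsto_div (h : IsBoundedSubadditive T K g) (hT : MeasurePreserving T μ μ) :
    ∀ᵐ x ∂μ, Tendsto (fun n : ℕ => g n x / n) atTop (𝓝 (upperRate g x)) := by
  refine h.ae_tendsto_of_integral_upperRate_le (le_of_forall_pos_le_add fun δ hδ => ?_)
  have hlim := ((h.tendsto_measureReal_lateSet μ hδ).const_mul K).const_add
    ((∫ x, lowerRate g x ∂μ) + δ)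
  rw [mul_zero, add_zero] at hlim
  exact ge_of_tendsto' hlim (h.integral_upperRate_le_add hT hδ.le)

end IsBoundedSubadditive

theorem ae_upperRate_birkhoffSum_iterate (hT : MeasurePreserving T μ μ) {f : X → ℝ}
    (hf : Measurable f) (hfK : ∀ x, f x ∈ Set.Icc 0 K) :
    ∀ᵐ x ∂μ, ∀ m, upperRate (birkhoffSum T f) (T^[m] x) = upperRate (birkhoffSum T f) x := by
  have rates_eq : ∀ᵐ x ∂μ, ∀ m, lowerRate (birkhoffSum T f) (T^[m] x) =
      upperRate (birkhoffSum T f) (T^[m] x) :=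
    ae_all_iff.2 fun m => (hT.iterate m).quasiMeasurePreserving.ae <|
      (ae_tendsto_birkhoffSum_div hT hf hfK).mono fun x hx => hx.liminf_eq
  filter_upwards [rates_eq,
    (isBoundedSubadditive_birkhoffSum hT.measurable hf hfK).ae_lowerRate_iterate hT]
    with x heq hinv m
  rw [← heq m, hinv m]
  exact heq 0

theorem exists_mem_tendsto_birkhoffSum_indicator_div (hT : MeasurePreserving T μ μ) {F : Set X}
    (hF : MeasurableSet F) (hμF : μ F ≠ 0) : ∃ x ∈ F, ∃ c > (0 : ℝ),
      Tendsto (fun n : ℕ => birkhoffSum T (F.indicator (1 : X → ℝ)) n x / n) atTop (𝓝 c) := by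
  have hind : Measurable (F.indicator (1 : X → ℝ)) := measurable_one.indicator hF
  have hmem : ∀ x, F.indicator (1 : X → ℝ) x ∈ Set.Icc 0 1 := indicator_one_mem_Icc F
  have hb := isBoundedSubadditive_birkhoffSum hT.measurable hind hmem
  have hlim : ∀ᵐ x ∂μ, ∀ m,
      Tendsto (fun n : ℕ => birkhoffSum T (F.indicator (1 : X → ℝ)) n (T^[m] x) / n) atTop
        (𝓝 (upperRate (birkhoffSum T (F.indicator 1)) (T^[m] x))) :=
    ae_all_iff.2 fun m =>
      (hT.iterate m).quasiMeasurePreserving.ae (ae_tendsto_birkhoffSum_div hT hind hmem)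
  by_contra! hcon
  have freq_zero : ∀ᵐ x ∂μ, upperRate (birkhoffSum T (F.indicator (1 : X → ℝ))) x = 0 := by
    filter_upwards [hlim, ae_upperRate_birkhoffSum_iterate hT hind hmem] with x hx hinv
    by_cases hvisit : ∃ m, T^[m] x ∈ F
    · obtain ⟨m, hm⟩ := hvisit
      by_contra hne
      have hpos := (hb.upperRate_mem_Icc x).1.lt_of_ne' hne
      exact hcon _ hm _ (hinv m ▸ hpos) (hx m)
    · exact upperRate_birkhoffSum_eq_zero_of_forall_notMem (not_exists.1 hvisit)
  have hle := (integral_le_integral_lowerRate_birkhoffSum hT hind hmem).trans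
    (integral_mono hb.integrable_lowerRate hb.integrable_upperRate hb.lowerRate_le_upperRate)
  rw [integral_congr_ae freq_zero, integral_indicator_one hF, integral_zero] at hle
  exact hμF ((measureReal_eq_zero_iff ..).1 (hle.antisymm measureReal_nonneg))

end ErgodicTheorems

section RealSequences

theorem rpow_one_div_le_iff {a c : ℝ} (ha : 0 ≤ a) (hc : 0 ≤ c) {n : ℕ} (hn : 0 < n) :
    a ^ (1 / (n : ℝ)) ≤ c ↔ a ≤ c ^ n := by
  rw [one_div, Real.rpow_inv_le_iff_of_pos ha hc (by positivity), Real.rpow_natCast]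

theorem exists_tendsto_of_forall_max_one_mul {v : ℕ → ℝ} (hv : ∀ n, 0 ≤ v n)
    (h : ∀ k : ℕ, ∃ l, Tendsto (fun n => max 1 (k * v n)) atTop (𝓝 l)) :
    ∃ l, Tendsto v atTop (𝓝 l) := by
  by_cases hsmall : ∀ ε > 0, ∀ᶠ n in atTop, v n < ε
  · exact ⟨0, tendsto_order.2 ⟨fun a ha => .of_forall fun n => ha.trans_le (hv n), hsmall⟩⟩
  push Not at hsmall
  obtain ⟨ε, hε, hfreq⟩ := hsmall
  obtain ⟨k, hk⟩ := exists_nat_gt ε⁻¹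
  have hk₀ : (0 : ℝ) < k := (inv_pos.2 hε).trans hk
  obtain ⟨l, hl⟩ := h k
  have one_lt : 1 < l := by
    refine ((inv_lt_iff_one_lt_mul₀ hε).1 hk).trans_le (ge_of_tendsto_of_frequently hl ?_)
    exact hfreq.mono fun n hn => le_max_of_le_right (by gcongr)
  refine ⟨(k : ℝ)⁻¹ * l, (hl.const_mul _).congr' ?_⟩
  filter_upwards [hl.eventually_const_lt one_lt] with n hn
  rw [max_eq_right_of_lt ((lt_max_iff.1 hn).resolve_left (lt_irrefl 1)),
    inv_mul_cancel_left₀ hk₀.ne']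

theorem exp_posLog_pow_mul_div {s a : ℝ} (hs : 0 ≤ s) (ha : 0 ≤ a) {n : ℕ} (hn : n ≠ 0) :
    Real.exp (Real.posLog (s ^ n * a) / n) = max 1 (s * a ^ (1 / (n : ℝ))) := by
  have hsa : 0 ≤ s ^ n * a := by positivity
  have hmax : 0 < max 1 (s ^ n * a) := by positivity
  rw [Real.posLog_eq_log_max_one hsa, div_eq_mul_one_div, ← Real.rpow_def_of_pos hmax,
    (Real.monotoneOn_rpow_Ici_of_exponent_nonneg (by positivity)).map_max
      (Set.mem_Ici.2 zero_le_one) (Set.mem_Ici.2 hsa),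
    Real.one_rpow, Real.mul_rpow (by positivity) ha, one_div, Real.pow_rpow_inv_natCast hs hn]

theorem tendsto_sum_range_mul_div {f : ℕ → ℝ} {c : ℝ}
    (h : Tendsto (fun n : ℕ => (∑ k ∈ Finset.range n, f k) / n) atTop (𝓝 c)) (j : ℕ) :
    Tendsto (fun m : ℕ => (∑ k ∈ Finset.range (j * m), f k) / m) atTop (𝓝 (j * c)) := by
  rcases j.eq_zero_or_pos with rfl | hj
  · simp
  · refine ((h.comp (tendsto_id.const_mul_atTop' hj)).const_mul (j : ℝ)).congr fun m => ?_
    have hj : (j : ℝ) ≠ 0 := by positivity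
    rw [Function.comp_apply, Nat.cast_mul, ← mul_div_assoc, id, mul_div_mul_left _ _ hj]

theorem eventually_exists_mem_Ico_mul_ne_zero {f : ℕ → ℝ} {c : ℝ} (hc : c ≠ 0)
    (h : Tendsto (fun n : ℕ => (∑ k ∈ Finset.range n, f k) / n) atTop (𝓝 c)) {a b : ℕ}
    (hab : a < b) : ∀ᶠ m : ℕ in atTop, ∃ k ∈ Set.Ico (a * m) (b * m), f k ≠ 0 := by
  have hlim := (tendsto_sum_range_mul_div h b).sub (tendsto_sum_range_mul_div h a)
  have hne : (b : ℝ) * c - a * c ≠ 0 := by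
    rw [← sub_mul]
    exact mul_ne_zero (sub_ne_zero.2 (by exact_mod_cast hab.ne')) hc
  filter_upwards [hlim.eventually_ne hne] with m hm
  by_contra! hzero
  rw [← sub_div, ← Finset.sum_Ico_eq_sub _ (by gcongr),
    Finset.sum_eq_zero fun k hk => hzero k (Finset.mem_Ico.1 hk), zero_div] at hm
  exact hm rfl

theorem exists_mem_Ioo_lt_pow {q : ℝ} (hq : q < 1) (Q : ℕ) :
    ∃ t ∈ Set.Ioo (0 : ℝ) 1, q < t ^ Q := by
  have hIoo : ∀ᶠ t in 𝓝[<] (1 : ℝ), t ∈ Set.Ioo (0 : ℝ) 1 := Ioo_mem_nhdsLT zero_lt_one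
  have hpow : ∀ᶠ t in 𝓝[<] (1 : ℝ), q < t ^ Q :=
    nhdsWithin_le_nhds (((continuous_pow Q).tendsto 1).eventually_const_lt (by rwa [one_pow]))
  exact (hIoo.and hpow).exists

variable {v w : ℕ → ℝ} {u : ℝ}

theorem limsup_rpow_one_div_le (hw : ∀ n, 0 ≤ w n) (hwv : ∀ n, w n ≤ v n)
    (hu : Tendsto (fun n : ℕ => v n ^ (1 / (n : ℝ))) atTop (𝓝 u)) :
    limsup (fun n : ℕ => w n ^ (1 / (n : ℝ))) atTop ≤ u := by
  rw [← hu.limsup_eq]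
  exact limsup_le_limsup
    (.of_forall fun n => Real.rpow_le_rpow (hw n) (hwv n) (by positivity))
    (isBoundedUnder_of ⟨0, fun n => Real.rpow_nonneg (hw n) _⟩).isCoboundedUnder_le
    hu.isBoundedUnder_le

/- If `w` grew at a rate `r < u`, then for `r / u < q < 1` and `u < c < u / t` the decay hypothesis
would bound the growth rate `u` of `v` by `t * c < u`. -/
theorem le_limsup_rpow_one_div_of_decay (hw : ∀ n, 0 ≤ w n) (hwv : ∀ n, w n ≤ v n)
    (hu : Tendsto (fun n : ℕ => v n ^ (1 / (n : ℝ))) atTop (𝓝 u))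
    (hdecay : ∀ q ∈ Set.Ico (0 : ℚ) 1, ∃ t ∈ Set.Ioo (0 : ℝ) 1, ∀ c : ℚ, 0 < c →
      (∀ᶠ n in atTop, v n ≤ c ^ n ∧ w n ≤ (q * c : ℝ) ^ n) → ∀ᶠ n in atTop, v n ≤ (t * c) ^ n) :
    u ≤ limsup (fun n : ℕ => w n ^ (1 / (n : ℝ))) atTop := by
  have hv n : 0 ≤ v n := (hw n).trans (hwv n)
  have bdd : IsBoundedUnder (· ≤ ·) atTop fun n : ℕ => w n ^ (1 / (n : ℝ)) :=
    hu.isBoundedUnder_le.mono_le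
      (.of_forall fun n => Real.rpow_le_rpow (hw n) (hwv n) (by positivity))
  have limsup_nonneg : 0 ≤ limsup (fun n : ℕ => w n ^ (1 / (n : ℝ))) atTop :=
    le_limsup_of_frequently_le (.of_forall fun n => Real.rpow_nonneg (hw n) _) bdd
  by_contra! hlt
  have hu₀ : 0 < u := limsup_nonneg.trans_lt hlt
  obtain ⟨q, hrq, hq₁⟩ := exists_rat_btwn ((div_lt_one hu₀).2 hlt)
  have hq₀ : (0 : ℝ) ≤ q := (div_nonneg limsup_nonneg hu₀.le).trans hrq.le
  obtain ⟨t, ⟨ht₀, ht₁⟩, ht⟩ := hdecay q ⟨by exact_mod_cast hq₀, by exact_mod_cast hq₁⟩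
  obtain ⟨c, huc, hct⟩ := exists_rat_btwn ((lt_div_iff₀ ht₀).2 (mul_lt_of_lt_one_right hu₀ ht₁))
  have hc₀ : (0 : ℝ) < c := hu₀.trans huc
  have growth : ∀ᶠ n in atTop, v n ≤ (c : ℝ) ^ n ∧ w n ≤ (q * c : ℝ) ^ n := by
    have hrqu := (div_lt_iff₀ hu₀).1 hrq
    filter_upwards [hu.eventually_lt_const huc, eventually_lt_of_limsup_lt hrqu bdd,
      eventually_gt_atTop 0] with n hvn hwn hn
    have hwn : w n ^ (1 / (n : ℝ)) ≤ q * c := hwn.le.trans (by gcongr)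
    exact ⟨(rpow_one_div_le_iff (hv n) hc₀.le hn).1 hvn.le,
      (rpow_one_div_le_iff (hw n) (by positivity) hn).1 hwn⟩
  have hle : u ≤ t * c := by
    refine le_of_tendsto hu ?_
    filter_upwards [ht c (by exact_mod_cast hc₀) growth, eventually_gt_atTop 0] with n hvn hn
    exact (rpow_one_div_le_iff (hv n) (by positivity) hn).2 hvn
  exact hle.not_gt ((lt_div_iff₀' ht₀).1 hct)

end RealSequences

section ContractingTimes

variable {R : Type*} [NormedRing R] [NormedAlgebra ℂ R]

/-- The times from which all products of at least `m` consecutive terms of `E` are contractions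
whose spectral radius decays at the exponential rate `q`. -/
def contractingTimes (E : ℕ → R) (q : ℝ) (m : ℕ) : Set ℕ :=
  {k | ∀ l ≥ m, ‖segProd E k l‖ ≤ 1 ∧ ρ(segProd E k l) ≤ q ^ l}

theorem contractingTimes_mono (E : ℕ → R) (q : ℝ) : Monotone (contractingTimes E q) :=
  fun _ _ hab _ hk l hl => hk l (hab.trans hl)

variable {N p : ℕ} {C : ℝ} {E : ℕ → R} {q t : ℝ}

theorem norm_segProd_le_of_mem_contractingTimes {m a b n : ℕ} (hzero : 0 ∈ contractingTimes E q m)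
    (hb : b ∈ contractingTimes E q m) (hma : m ≤ a) (hab : a ≤ b) (hbn : b + m ≤ n) :
    ‖segProd E 0 n‖ ≤ ‖segProd E a (b - a)‖ := by
  have hsplit : segProd E 0 n = segProd E b (n - b) * (segProd E a (b - a) * segProd E 0 a) := by
    have hinner := segProd_add E 0 a (b - a)
    have houter := segProd_add E 0 b (n - b)
    rw [Nat.add_sub_cancel' hab, zero_add] at hinner
    rw [Nat.add_sub_cancel' (Nat.le_of_add_right_le hbn), zero_add] at houter
    rw [houter, hinner]
  calc ‖segProd E 0 n‖
      ≤ ‖segProd E b (n - b)‖ * ‖segProd E a (b - a) * segProd E 0 a‖ := by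
        rw [hsplit]
        exact norm_mul_le _ _
    _ ≤ ‖segProd E a (b - a) * segProd E 0 a‖ :=
        mul_le_of_le_one_left (norm_nonneg _) (hb _ (Nat.le_sub_of_add_le' hbn)).1
    _ ≤ ‖segProd E a (b - a)‖ * ‖segProd E 0 a‖ := norm_mul_le _ _
    _ ≤ ‖segProd E a (b - a)‖ := mul_le_of_le_one_right (norm_nonneg _) (hzero a hma).1

theorem norm_segProd_blocks_pow_le (hbound : SpectralProdBound R N p C) (hq : q ∈ Set.Icc 0 1)
    {m : ℕ} {s : ℕ → ℕ} (hs : ∀ i < N, s i ∈ contractingTimes E q m)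
    (hgap : ∀ i < N, s i + m ≤ s (i + 1)) :
    ‖segProd E (s 0) (s N - s 0)‖ ^ p ≤ C * q ^ m := by
  have hmono : MonotoneOn s (Set.Iic N) :=
    monotoneOn_of_le_succ Set.ordConnected_Iic fun i _ _ hi =>
      Nat.le_of_add_right_le (hgap i (Order.succ_le_iff.1 hi))
  have hmonoOn {i j : ℕ} (hij : i + j ≤ N) : MonotoneOn s (Set.Icc i (i + j)) :=
    hmono.mono fun _ hk => hk.2.trans hij
  have hblock (i : ℕ) (hi : i < N) : ‖segProd E (s i) (s (i + 1) - s i)‖ ≤ 1 :=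
    (hs i hi _ (Nat.le_sub_of_add_le' (hgap i hi))).1
  have hradius (i j : ℕ) (hij : i + j < N) :
      ρ(segProd (fun i => segProd E (s i) (s (i + 1) - s i)) i (j + 1)) ≤ q ^ m := by
    have hlen : m ≤ s (i + (j + 1)) - s i := by
      have hle : s i ≤ s (i + j) := hmonoOn hij.le (by simp) (by simp) (by simp)
      exact Nat.le_sub_of_add_le' ((Nat.add_le_add_right hle m).trans (hgap (i + j) hij))
    rw [segProd_blocks E (hmonoOn hij)]
    exact (hs i (by omega) _ hlen).2.trans (pow_le_pow_of_le_one hq.1 hq.2 hlen)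
  have hpow := hbound _ (q ^ m) hblock (pow_le_one₀ hq.1 hq.2) hradius (pow_nonneg hq.1 m)
  rwa [segProd_blocks E (hmonoOn (zero_add N).le), zero_add] at hpow

theorem eventually_norm_segProd_pow_le (hbound : SpectralProdBound R N p C) (hq : q ∈ Set.Icc 0 1)
    {n₀ : ℕ} (hzero : 0 ∈ contractingTimes E q n₀)
    (hreturn : ∀ i ≤ N, ∀ᶠ m : ℕ in atTop,
      ∃ k ∈ Set.Ico ((2 * i + 1) * m) ((2 * i + 2) * m), k ∈ contractingTimes E q n₀) :
    ∀ᶠ m : ℕ in atTop, ∀ n ≥ (2 * N + 3) * m, ‖segProd E 0 n‖ ^ p ≤ C * q ^ m := by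
  filter_upwards [(Set.finite_Iic N).eventually_all.2 hreturn, eventually_ge_atTop n₀]
    with m hm hnm n hn
  choose! s hsIco hs using hm
  replace hs i (hi : i ≤ N) : s i ∈ contractingTimes E q m :=
    contractingTimes_mono E q hnm (hs i hi)
  have hgap i (hi : i < N) : s i + m ≤ s (i + 1) := by
    have hlt := (hsIco i hi.le).2
    have hle := (hsIco (i + 1) hi).1
    linarith
  have hfirst : m ≤ s 0 := by simpa using (hsIco 0 N.zero_le).1
  have hle : s 0 ≤ s N :=
    monotoneOn_of_le_succ Set.ordConnected_Iic
      (fun i _ _ hi => Nat.le_of_add_right_le (hgap i (Order.succ_le_iff.1 hi)))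
      (Set.mem_Iic.2 N.zero_le) (Set.mem_Iic.2 le_rfl) N.zero_le
  have hlast : s N + m ≤ n := by
    have hlt := (hsIco N Set.self_mem_Iic).2
    linarith
  exact (pow_le_pow_left₀ (norm_nonneg _) (norm_segProd_le_of_mem_contractingTimes
    (contractingTimes_mono E q hnm hzero) (hs N le_rfl) hfirst hle hlast) p).trans
    (norm_segProd_blocks_pow_le hbound hq (fun i hi => hs i hi.le) hgap)

theorem eventually_norm_segProd_lt (hbound : SpectralProdBound R N p C) (hq : 0 ≤ q)
    (ht : t ∈ Set.Ioo 0 1) (hqt : q < t ^ ((4 * N + 6) * p)) {n₀ : ℕ}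
    (hzero : 0 ∈ contractingTimes E q n₀)
    (hreturn : ∀ i ≤ N, ∀ᶠ m : ℕ in atTop,
      ∃ k ∈ Set.Ico ((2 * i + 1) * m) ((2 * i + 2) * m), k ∈ contractingTimes E q n₀) :
    ∀ᶠ n in atTop, ‖segProd E 0 n‖ < t ^ n := by
  obtain ⟨ht₀, ht₁⟩ := ht
  have hq₁ : q ≤ 1 := hqt.le.trans (pow_le_one₀ ht₀.le ht₁.le)
  have hsmall : ∀ᶠ m : ℕ in atTop, C * q ^ m < (t ^ ((4 * N + 6) * p)) ^ m := by
    have hlim := (tendsto_pow_atTop_nhds_zero_of_lt_one (by positivity)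
      ((div_lt_one (by positivity)).2 hqt)).const_mul C
    rw [mul_zero] at hlim
    filter_upwards [hlim.eventually_lt_const zero_lt_one] with m hm
    rwa [div_pow, ← mul_div_assoc, div_lt_one (by positivity)] at hm
  have hdiv : Tendsto (· / (2 * N + 3)) atTop atTop := Nat.tendsto_div_const_atTop (by omega)
  filter_upwards [hdiv.eventually (eventually_norm_segProd_pow_le hbound ⟨hq, hq₁⟩ hzero hreturn),
    hdiv.eventually hsmall, hdiv.eventually_ge_atTop 1] with n hpow hlt hone
  set m := n / (2 * N + 3)
  have hn : n * p ≤ (4 * N + 6) * p * m := by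
    have hnm : n < (2 * N + 3) * (m + 1) := Nat.lt_mul_div_succ n (by omega)
    have hn : n ≤ (4 * N + 6) * m := by nlinarith
    exact (Nat.mul_le_mul_right p hn).trans_eq (by ring)
  refine lt_of_pow_lt_pow_left₀ p (by positivity) ?_
  calc ‖segProd E 0 n‖ ^ p
      ≤ C * q ^ m := hpow n (Nat.mul_div_le _ _)
    _ < (t ^ ((4 * N + 6) * p)) ^ m := hlt
    _ = t ^ ((4 * N + 6) * p * m) := (pow_mul _ _ _).symm
    _ ≤ t ^ (n * p) := pow_le_pow_of_le_one ht₀.le ht₁.le hn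
    _ = (t ^ n) ^ p := pow_mul _ _ _

end ContractingTimes

/-- The cocycle `A (T^[n - 1] x) * ⋯ * A (T x) * A x` generated by `A` over the dynamical system
`T`. -/
def cocycle {X R : Type*} [Monoid R] (T : X → X) (A : X → R) (n : ℕ) (x : X) : R :=
  segProd (fun k => A (T^[k] x)) 0 n

section Cocycle

variable {X R : Type*} [Monoid R] {T : X → X} {A : X → R}

theorem cocycle_apply_iterate (k n : ℕ) (x : X) :
    cocycle T A n (T^[k] x) = segProd (fun j => A (T^[j] x)) k n := by
  simp only [cocycle, ← Function.iterate_add_apply, add_comm _ k,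
    segProd_shift (fun j => A (T^[j] x)), add_zero]

theorem cocycle_succ (n : ℕ) (x : X) :
    cocycle T A (n + 1) x = A (T^[n] x) * cocycle T A n x := by
  rw [cocycle, segProd_succ, zero_add, ← cocycle]

theorem cocycle_add (m n : ℕ) (x : X) :
    cocycle T A (m + n) x = cocycle T A n (T^[m] x) * cocycle T A m x := by
  rw [cocycle_apply_iterate, cocycle, segProd_add, zero_add, cocycle]

theorem cocycle_congr {A' : X → R} {x : X} (h : ∀ k, A (T^[k] x) = A' (T^[k] x)) (n : ℕ) :
    cocycle T A n x = cocycle T A' n x :=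
  segProd_congr fun j _ => h j

theorem stronglyMeasurable_cocycle [TopologicalSpace R] [ContinuousMul R] [MeasurableSpace X]
    (hT : Measurable T) (hA : StronglyMeasurable A) (n : ℕ) :
    StronglyMeasurable (cocycle T A n) := by
  induction n with
  | zero => exact stronglyMeasurable_one
  | succ n ih =>
    simp only [funext (cocycle_succ n)]
    exact (hA.comp_measurable (hT.iterate n)).mul ih

end Cocycle

theorem cocycle_smul {X K R : Type*} [CommSemiring K] [Semiring R] [Algebra K R] (T : X → X)
    (A : X → R) (c : K) (n : ℕ) (x : X) :
    cocycle T (fun x => c • A x) n x = c ^ n • cocycle T A n x :=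
  segProd_smul c _ 0 n

section NormGrowth

variable {X R : Type*} [NormedRing R] [NormOneClass R] {T : X → X} {A : X → R} {C : ℝ}

theorem norm_cocycle_le (hC : ∀ x, ‖A x‖ ≤ C) (n : ℕ) (x : X) : ‖cocycle T A n x‖ ≤ C ^ n := by
  induction n with
  | zero => simp [cocycle]
  | succ n ih =>
    have hC₀ : 0 ≤ C := (norm_nonneg (A x)).trans (hC x)
    rw [cocycle_succ, pow_succ']
    exact (norm_mul_le _ _).trans (by gcongr; exact hC _)

variable [MeasurableSpace X]

theorem isBoundedSubadditive_posLog_norm_cocycle (hT : Measurable T) (hA : StronglyMeasurable A)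
    (hC : ∀ x, ‖A x‖ ≤ C) {s : ℝ} (hs : 0 ≤ s) :
    IsBoundedSubadditive T (Real.posLog (s * C))
      fun n x => Real.posLog (s ^ n * ‖cocycle T A n x‖) where
  measurable n := measurable_const.max <|
    Real.measurable_log.comp ((stronglyMeasurable_cocycle hT hA n).norm.measurable.const_mul _)
  nonneg n x := Real.posLog_nonneg
  le_mul n x := by
    rw [mul_comm (Real.posLog _), ← Real.posLog_pow, mul_pow]
    exact Real.posLog_le_posLog (by positivity) (by gcongr; exact norm_cocycle_le hC n x)
  add_le m n x := by
    refine (Real.posLog_le_posLog (by positivity) ?_).trans Real.posLog_mul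
    rw [cocycle_add, pow_add, mul_mul_mul_comm, mul_comm ‖cocycle T A m x‖]
    gcongr
    exact norm_mul_le _ _

variable {μ : Measure X} [IsProbabilityMeasure μ]

/- Truncating at `1 / k`, that is, working with `log⁺ (k ^ n * ‖·‖)`, keeps Kingman's theorem
available when the growth rate is `0` and `log ‖·‖` has no lower bound. -/
theorem ae_exists_tendsto_norm_cocycle_of_forall_norm_le (hT : MeasurePreserving T μ μ)
    (hA : StronglyMeasurable A) (hC : ∀ x, ‖A x‖ ≤ C) :
    ∀ᵐ x ∂μ, ∃ u, Tendsto (fun n : ℕ => ‖cocycle T A n x‖ ^ (1 / (n : ℝ))) atTop (𝓝 u) := by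
  have kingman (k : ℕ) := (isBoundedSubadditive_posLog_norm_cocycle hT.measurable hA hC
    (Nat.cast_nonneg k)).ae_tendsto_div hT
  filter_upwards [ae_all_iff.2 kingman] with x hx
  refine exists_tendsto_of_forall_max_one_mul (fun n => by positivity) fun k =>
    ⟨_, ((Real.continuous_exp.tendsto _).comp (hx k)).congr' ?_⟩
  filter_upwards [eventually_ne_atTop 0] with n hn
  exact exp_posLog_pow_mul_div (Nat.cast_nonneg k) (norm_nonneg _) hn

theorem ae_exists_tendsto_norm_cocycle (hT : MeasurePreserving T μ μ)
    (hA : StronglyMeasurable A) (hC : ∀ᵐ x ∂μ, ‖A x‖ ≤ C) :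
    ∀ᵐ x ∂μ, ∃ u, Tendsto (fun n : ℕ => ‖cocycle T A n x‖ ^ (1 / (n : ℝ))) atTop (𝓝 u) := by
  set A' : X → R := {x | ‖A x‖ ≤ C}.indicator A
  have hA' : StronglyMeasurable A' :=
    hA.indicator (measurableSet_le hA.norm.measurable measurable_const)
  have hA'C (x : X) : ‖A' x‖ ≤ max C 0 := by
    by_cases hx : ‖A x‖ ≤ C <;> simp [A', hx]
  have orbit_le : ∀ᵐ x ∂μ, ∀ k, ‖A (T^[k] x)‖ ≤ C :=
    ae_all_iff.2 fun k => (hT.iterate k).quasiMeasurePreserving.ae hC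
  filter_upwards [ae_exists_tendsto_norm_cocycle_of_forall_norm_le hT hA' hA'C, orbit_le]
    with x hx hle
  have horbit (k : ℕ) : A' (T^[k] x) = A (T^[k] x) :=
    Set.indicator_of_mem (s := {x | ‖A x‖ ≤ C}) (hle k) A
  simpa only [cocycle_congr horbit] using hx

end NormGrowth

/-- The points whose cocycle is, from time `n₀` on, a contraction with spectral radius at most
`q ^ n`, although its norm does not eventually drop below `t ^ n`. -/
def slowDecaySet {X R : Type*} [NormedRing R] [NormedAlgebra ℂ R] (T : X → X) (A : X → R)
    (q t : ℝ) (n₀ : ℕ) : Set X :=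
  {x | (∀ n ≥ n₀, ‖cocycle T A n x‖ ≤ 1 ∧ ρ(cocycle T A n x) ≤ q ^ n) ∧
    ∃ᶠ n in atTop, t ^ n ≤ ‖cocycle T A n x‖}

section SpectralGrowth

variable {X R : Type*} [MeasurableSpace X] {μ : Measure X} [IsProbabilityMeasure μ]
  [NormedRing R] [NormedAlgebra ℂ R] [CompleteSpace R] {T : X → X} {A : X → R}
  {N p : ℕ} {C q t : ℝ}

theorem measurableSet_slowDecaySet (hT : Measurable T) (hA : StronglyMeasurable A) (q t : ℝ)
    (n₀ : ℕ) : MeasurableSet (slowDecaySet T A q t n₀) := by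
  have hcocycle := stronglyMeasurable_cocycle hT hA
  have hnorm n := (hcocycle n).norm.measurable
  have hradius n := (stronglyMeasurable_toReal_spectralRadius (hcocycle n)).measurable
  have hcontracting : MeasurableSet
      {x | ∀ n ≥ n₀, ‖cocycle T A n x‖ ≤ 1 ∧ ρ(cocycle T A n x) ≤ q ^ n} := by
    simp only [Set.ofPred_forall]
    exact .iInter fun n => .iInter fun _ => (measurableSet_le (hnorm n) measurable_const).inter
      (measurableSet_le (hradius n) measurable_const)
  have hslow : MeasurableSet {x | ∃ᶠ n in atTop, t ^ n ≤ ‖cocycle T A n x‖} := by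
    have hlimsup : {x | ∃ᶠ n in atTop, t ^ n ≤ ‖cocycle T A n x‖} =
        limsup (fun n => {x | t ^ n ≤ ‖cocycle T A n x‖}) atTop := by
      ext x
      simp only [mem_limsup_iff_frequently_mem, Set.mem_ofPred_eq]
    rw [hlimsup]
    exact .measurableSet_limsup fun n => measurableSet_le measurable_const (hnorm n)
  exact hcontracting.inter hslow

theorem measure_slowDecaySet_eq_zero (hbound : SpectralProdBound R N p C)
    (hT : MeasurePreserving T μ μ) (hA : StronglyMeasurable A) (hq : 0 ≤ q)
    (ht : t ∈ Set.Ioo 0 1) (hqt : q < t ^ ((4 * N + 6) * p)) (n₀ : ℕ) :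
    μ (slowDecaySet T A q t n₀) = 0 := by
  by_contra hμ
  obtain ⟨x, hx, c, hc, hfreq⟩ := exists_mem_tendsto_birkhoffSum_indicator_div hT
    (measurableSet_slowDecaySet hT.measurable hA q t n₀) hμ
  set E : ℕ → R := fun k => A (T^[k] x)
  have hcontracting (k : ℕ) (hk : T^[k] x ∈ slowDecaySet T A q t n₀) :
      k ∈ contractingTimes E q n₀ := fun n hn => by
    simpa only [cocycle_apply_iterate] using hk.1 n hn
  have hreturn (i : ℕ) : ∀ᶠ m : ℕ in atTop,
      ∃ k ∈ Set.Ico ((2 * i + 1) * m) ((2 * i + 2) * m), k ∈ contractingTimes E q n₀ := by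
    filter_upwards [eventually_exists_mem_Ico_mul_ne_zero hc.ne' hfreq
      (Nat.lt_succ_self (2 * i + 1))] with m ⟨k, hk, hne⟩
    exact ⟨k, hk, hcontracting k (Set.mem_of_indicator_ne_zero hne)⟩
  have hdecay := eventually_norm_segProd_lt hbound hq ht hqt (hcontracting 0 hx)
    fun i _ => hreturn i
  exact hx.2 (hdecay.mono fun n hn => hn.not_ge)

theorem ae_eventually_norm_cocycle_lt (hbound : SpectralProdBound R N p C)
    (hT : MeasurePreserving T μ μ) (hA : StronglyMeasurable A) (hq : 0 ≤ q)
    (ht : t ∈ Set.Ioo 0 1) (hqt : q < t ^ ((4 * N + 6) * p)) :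
    ∀ᵐ x ∂μ, (∀ᶠ n in atTop, ‖cocycle T A n x‖ ≤ 1 ∧ ρ(cocycle T A n x) ≤ q ^ n) →
      ∀ᶠ n in atTop, ‖cocycle T A n x‖ < t ^ n := by
  have hnotMem (n₀ : ℕ) : ∀ᵐ x ∂μ, x ∉ slowDecaySet T A q t n₀ :=
    measure_eq_zero_iff_ae_notMem.1 (measure_slowDecaySet_eq_zero hbound hT hA hq ht hqt n₀)
  filter_upwards [ae_all_iff.2 hnotMem] with x hx hev
  obtain ⟨n₀, hn₀⟩ := eventually_atTop.1 hev
  by_contra hslow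
  exact hx n₀ ⟨hn₀, (not_eventually.1 hslow).mono fun n => le_of_not_gt⟩

theorem ae_eventually_norm_cocycle_le_mul_pow (hbound : SpectralProdBound R N p C)
    (hT : MeasurePreserving T μ μ) (hA : StronglyMeasurable A) (hq : 0 ≤ q)
    (ht : t ∈ Set.Ioo 0 1) (hqt : q < t ^ ((4 * N + 6) * p)) {c : ℝ} (hc : 0 < c) :
    ∀ᵐ x ∂μ, (∀ᶠ n in atTop, ‖cocycle T A n x‖ ≤ c ^ n ∧ ρ(cocycle T A n x) ≤ (q * c) ^ n) →
      ∀ᶠ n in atTop, ‖cocycle T A n x‖ ≤ (t * c) ^ n := by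
  have hnorm (n : ℕ) : ‖((c : ℂ)⁻¹) ^ n‖ = (c ^ n)⁻¹ := by
    rw [norm_pow, norm_inv, Complex.norm_real, Real.norm_of_nonneg hc.le, inv_pow]
  filter_upwards [ae_eventually_norm_cocycle_lt hbound hT (hA.const_smul ((c : ℂ)⁻¹)) hq ht hqt]
    with x hx hev
  simp only [Pi.smul_def, cocycle_smul, norm_smul, toReal_spectralRadius_smul, hnorm,
    inv_mul_le_iff₀ (pow_pos hc _), inv_mul_lt_iff₀ (pow_pos hc _), mul_one] at hx
  refine (hx (hev.mono fun n hn => ⟨hn.1, ?_⟩)).mono fun n hn => ?_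
  · rw [← mul_pow, mul_comm]; exact hn.2
  · rw [mul_pow, mul_comm]; exact hn.le

theorem ae_tendsto_norm_cocycle_limsup_spectralRadius [NormOneClass R]
    (hbound : SpectralProdBound R N p C) (hT : MeasurePreserving T μ μ)
    (hA : StronglyMeasurable A) {D : ℝ} (hD : ∀ᵐ x ∂μ, ‖A x‖ ≤ D) :
    ∀ᵐ x ∂μ, Tendsto (fun n : ℕ => ‖cocycle T A n x‖ ^ (1 / (n : ℝ))) atTop
      (𝓝 (limsup (fun n : ℕ => ρ(cocycle T A n x) ^ (1 / (n : ℝ))) atTop)) := by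
  have hrate (q : Set.Ico (0 : ℚ) 1) :
      ∃ t ∈ Set.Ioo (0 : ℝ) 1, (q : ℝ) < t ^ ((4 * N + 6) * p) :=
    exists_mem_Ioo_lt_pow (by exact_mod_cast q.2.2) _
  choose t ht hqt using hrate
  have decay : ∀ᵐ x ∂μ, ∀ (q : Set.Ico (0 : ℚ) 1) (c : Set.Ioi (0 : ℚ)),
      (∀ᶠ n in atTop, ‖cocycle T A n x‖ ≤ (c : ℝ) ^ n ∧
        ρ(cocycle T A n x) ≤ (q * c : ℝ) ^ n) →
      ∀ᶠ n in atTop, ‖cocycle T A n x‖ ≤ (t q * c) ^ n :=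
    ae_all_iff.2 fun q => ae_all_iff.2 fun c => ae_eventually_norm_cocycle_le_mul_pow hbound hT hA
      (by exact_mod_cast q.2.1) (ht q) (hqt q) (by exact_mod_cast c.2)
  filter_upwards [ae_exists_tendsto_norm_cocycle hT hA hD, decay] with x ⟨u, hu⟩ hx
  have hradius (n : ℕ) : 0 ≤ ρ(cocycle T A n x) := ENNReal.toReal_nonneg
  have radius_le (n : ℕ) := toReal_spectralRadius_le_norm (cocycle T A n x)
  have hle := limsup_rpow_one_div_le hradius radius_le hu
  have hge := le_limsup_rpow_one_div_of_decay hradius radius_le hu fun q hq =>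
    ⟨t ⟨q, hq⟩, ht ⟨q, hq⟩, fun c hc => hx ⟨q, hq⟩ ⟨c, hc⟩⟩
  rwa [hle.antisymm hge]

end SpectralGrowth

section MatrixCocycle

open scoped Matrix.Norms.L2Operator

theorem ae_norm_growth_eq_specRad_growth_general {X n : Type*} [MeasurableSpace X] {μ : Measure X}
    [IsProbabilityMeasure μ] [Fintype n] [DecidableEq n] [Nonempty n] {T : X → X}
    (hT : MeasurePreserving T μ μ) {A : X → Matrix n n ℂ} (hA : StronglyMeasurable A) {C : ℝ}
    (hC : ∀ᵐ x ∂μ, ‖A x‖ ≤ C) :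
    ∀ᵐ x ∂μ, Tendsto (fun k : ℕ => ‖cocycle T A k x‖ ^ (1 / (k : ℝ))) atTop
      (𝓝 (limsup (fun k : ℕ => ρ(cocycle T A k x) ^ (1 / (k : ℝ))) atTop)) := by
  obtain ⟨N, p, D, hbound⟩ := exists_spectralProdBound_matrix n
  exact ae_tendsto_norm_cocycle_limsup_spectralRadius hbound hT hA hC

variable {d : ℕ} {I : Type*}

theorem norm_eq_opNorm (A : Matrix (Fin d) (Fin d) ℂ) : ‖A‖ = opNorm A :=
  (Matrix.l2_opNorm_toEuclideanCLM A).symm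

theorem iterate_shift_apply (x : ℕ → I) (n k : ℕ) :
    (fun (x : ℕ → I) (n : ℕ) => x (n + 1))^[n] x k = x (k + n) := by
  induction n generalizing x with
  | zero => rfl
  | succ n ih => rw [Function.iterate_succ_apply, ih, add_assoc, add_comm n]

theorem cocycle_shift_eq_prodS (S : I → Matrix (Fin d) (Fin d) ℂ) (n : ℕ) (x : ℕ → I) :
    cocycle (fun (x : ℕ → I) (n : ℕ) => x (n + 1)) (fun x => S (x 0)) n x = prodS S x n := by
  induction n with
  | zero => rfl
  | succ n ih => rw [cocycle_succ, ih, iterate_shift_apply, zero_add, prodS]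

theorem exists_ae_norm_le_of_isCompact {X E : Type*} [TopologicalSpace X] [T2Space X]
    [MeasurableSpace X] [BorelSpace X] [SeminormedAddCommGroup E] {μ : Measure X}
    [IsProbabilityMeasure μ] {K : Set X} (hK : IsCompact K) (hμK : μ K = 1) {f : X → E}
    (hf : ContinuousOn f K) : ∃ C, ∀ᵐ x ∂μ, ‖f x‖ ≤ C := by
  obtain ⟨C, hC⟩ := hK.exists_bound_of_continuousOn hf
  have hmem : ∀ᵐ x ∂μ, x ∈ K := (mem_ae_iff_prob_eq_one hK.measurableSet).2 hμK
  exact ⟨C, hmem.mono hC⟩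

end MatrixCocycle

/-- For any shift-invariant Borel probability measure supported in a compact invariant set
`Λ`, almost every signal satisfies `lim ‖S_{i_n}⋯S_{i_1}‖^{1/n} = limsup ρ(S_{i_n}⋯S_{i_1})^{1/n}`. -/
theorem ae_norm_growth_eq_specRad_growth {d : ℕ} (hd : 1 ≤ d) {I : Type*} [MetricSpace I]
    [MeasurableSpace (ℕ → I)] [BorelSpace (ℕ → I)]
    (S : I → Matrix (Fin d) (Fin d) ℂ) (hS : Continuous S)
    (Λ : Set (ℕ → I)) (hne : Λ.Nonempty) (hcomp : IsCompact Λ) (hinv : ShiftInv Λ)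
    (μ : Measure (ℕ → I)) [IsProbabilityMeasure μ]
    (hμinv : MeasurePreserving (fun (x : ℕ → I) (n : ℕ) => x (n + 1)) μ μ)
    (hμΛ : μ Λ = 1) :
    ∀ᵐ x ∂μ,
      Filter.Tendsto (fun n : ℕ => opNorm (prodS S x n) ^ (1 / (n : ℝ))) Filter.atTop
        (nhds (Filter.limsup
          (fun n : ℕ => specRad (prodS S x n) ^ (1 / (n : ℝ))) Filter.atTop)) := by
  have : Nonempty (Fin d) := ⟨⟨0, hd⟩⟩
  have hcont : Continuous fun x : ℕ → I => S (x 0) := hS.comp (continuous_apply 0)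
  open scoped Matrix.Norms.L2Operator in
  obtain ⟨C, hC⟩ := exists_ae_norm_le_of_isCompact hcomp hμΛ hcont.continuousOn
  simpa only [norm_eq_opNorm, cocycle_shift_eq_prodS, specRad] using
    ae_norm_growth_eq_specRad_growth_general hμinv hcont.stronglyMeasurable hC
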